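/- Fix a positive integer k. If c_1 < c_2 < c_3 < ... is the increasing enumeration of the cyclic numbers, then c_1^k + c_2^k + ... + c_n^k is asymptotically equivalent to n·c_n^k/(k+1) as n → ∞, i.e., the ratio of the two quantities tends to 1. -/

import Mathlib

open Filter Asymptotics Real

/-- A positive integer `n` is *cyclic* if `gcd(n, φ(n)) = 1`. -/
def IsCyclicNum (n : ℕ) : Prop := 0 < n ∧ Nat.gcd n (Nat.totient n) = 1

instance : DecidablePred IsCyclicNum := fun n =>
  decidable_of_iff (0 < n ∧ Nat.gcd n (Nat.totient n) = 1) Iff.rfl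

/-- The `n`-th cyclic number, indexed from 1: `cyclicNum 1 = 1`, `cyclicNum 2 = 2`, .... -/
noncomputable def cyclicNum (n : ℕ) : ℕ := Nat.nth IsCyclicNum (n - 1)

/-- The number of cyclic numbers less than or equal to the real number `x`. -/
noncomputable def cyclicCount (x : ℝ) : ℕ :=
  ((Finset.range (⌊x⌋₊ + 1)).filter IsCyclicNum).card

lemma abel_bound (f : ℕ → ℂ) (b : ℕ → ℝ) (B : ℝ) (hf : ∀ n, ‖∑ i ∈ Finset.range n, f i‖ ≤ B)
    (hb : Antitone b) (hb0 : ∀ n, 0 ≤ b n) (n : ℕ) :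
    ‖∑ i ∈ Finset.range n, f i * (b i : ℂ)‖ ≤ B * b 0 := by
  have key : ∀ n, ∑ i ∈ Finset.range n, f i * (b i : ℂ) =
      (∑ i ∈ Finset.range n, f i) * (b n : ℂ) +
      ∑ i ∈ Finset.range n, (∑ j ∈ Finset.range (i+1), f j) * ((b i - b (i+1) : ℝ) : ℂ) := by
    intro n
    induction n with
    | zero => simp
    | succ n ih =>
      rw [Finset.sum_range_succ, ih, Finset.sum_range_succ (fun i => (∑ j ∈ Finset.range (i+1), f j) * ((b i - b (i+1) : ℝ) : ℂ)), Finset.sum_range_succ f]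
      push_cast; ring
  have hB : 0 ≤ B := le_trans (norm_nonneg _) (hf 0)
  rw [key]
  calc _ ≤ ‖(∑ i ∈ Finset.range n, f i) * (b n : ℂ)‖ + ‖∑ i ∈ Finset.range n, (∑ j ∈ Finset.range (i+1), f j) * ((b i - b (i+1) : ℝ) : ℂ)‖ := norm_add_le _ _
    _ ≤ B * b n + ∑ i ∈ Finset.range n, B * (b i - b (i+1)) := by
      gcongr
      · rw [norm_mul, Complex.norm_real, Real.norm_of_nonneg (hb0 n)]
        exact mul_le_mul_of_nonneg_right (hf n) (hb0 n)
      · refine (norm_sum_le _ _).trans (Finset.sum_le_sum fun i _ => ?_)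
        have h := sub_nonneg.2 (hb (Nat.le_succ i))
        rw [norm_mul, Complex.norm_real, Real.norm_of_nonneg h]
        exact mul_le_mul_of_nonneg_right (hf _) h
    _ = B * b 0 := by
      rw [← Finset.mul_sum, Finset.sum_range_sub']; ring

lemma char_sum_bound {p : ℕ} [hp : Fact p.Prime] (χ : DirichletCharacter ℂ p) (hχ : χ ≠ 1) (n : ℕ) :
    ‖∑ i ∈ Finset.range n, χ ((i + 1 : ℕ) : ZMod p)‖ ≤ p := by
  have hz : ∀ c : ℕ, ∑ i ∈ Finset.range p, χ ((c + i + 1 : ℕ) : ZMod p) = 0 := by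
    intro c
    have h0 : ∑ a : ZMod p, χ a = 0 := MulChar.sum_eq_zero_of_ne_one hχ
    have h1 : ∑ a : ZMod p, χ (a + (c + 1 : ZMod p)) = 0 := by
      rw [← h0]; exact Fintype.sum_equiv (Equiv.addRight _) _ _ (fun _ => rfl)
    rw [← h1]
    refine Finset.sum_bij' (fun i _ => (i : ZMod p)) (fun a _ => a.val) ?_ ?_ ?_ ?_ ?_
    · simp
    · intro a _; simpa using ZMod.val_lt a
    · intro i hi; exact ZMod.val_cast_of_lt (by simpa using hi)
    · intro a _; exact ZMod.natCast_zmod_val a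
    · intro i _; congr 1; push_cast; ring
  induction n using Nat.strong_induction_on with
  | _ n ih =>
    by_cases h : n < p
    · refine (norm_sum_le _ _).trans ?_
      calc _ ≤ ∑ i ∈ Finset.range n, (1:ℝ) := Finset.sum_le_sum fun i _ => DirichletCharacter.norm_le_one _ _
        _ = n := by simp
        _ ≤ p := by exact_mod_cast h.le
    · push Not at h
      obtain ⟨m, rfl⟩ := Nat.exists_eq_add_of_le' h
      rw [Finset.sum_range_add, hz, add_zero]
      exact ih m (by have := hp.out.pos; omega)

lemma LS_hasSum {p : ℕ} (χ : DirichletCharacter ℂ p) {s : ℝ} (hs : 1 < s) :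
    HasSum (fun i : ℕ => χ ((i + 1 : ℕ) : ZMod p) * (((((i+1:ℕ) : ℝ) ^ (-s)) : ℝ) : ℂ)) (LSeries (fun n => χ n) s) := by
  have h1 : LSeriesSummable (fun n => χ n) (s : ℂ) :=
    DirichletCharacter.LSeriesSummable_of_one_lt_re χ (by simpa using hs)
  have h2 := h1.LSeriesHasSum
  unfold LSeriesHasSum at h2
  rw [← hasSum_nat_add_iff' 1] at h2
  simp only [Finset.range_one, Finset.sum_singleton, LSeries.term_zero, sub_zero] at h2
  have e : (fun i : ℕ => χ ((i + 1 : ℕ) : ZMod p) * (((((i+1:ℕ) : ℝ) ^ (-s)) : ℝ) : ℂ)) =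
      fun i : ℕ => LSeries.term (fun n => χ n) (s : ℂ) (i + 1) := by
    funext i
    rw [LSeries.term_of_ne_zero (by omega), div_eq_mul_inv, ← Complex.cpow_neg, Complex.ofReal_cpow (by positivity)]
    push_cast; rfl
  rw [e]; exact h2

lemma rpow_diff_antitone {s s' : ℝ} (hs : 1 ≤ s) (hss : s ≤ s') :
    Antitone (fun i : ℕ => ((i+1:ℕ) : ℝ) ^ (-s) / s - ((i+1:ℕ) : ℝ) ^ (-s') / s') := by
  have h : AntitoneOn (fun t : ℝ => t ^ (-s) / s - t ^ (-s') / s') (Set.Ici 1) := by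
    have hd : ∀ t : ℝ, 0 < t → HasDerivAt (fun t : ℝ => t ^ (-s) / s - t ^ (-s') / s')
        ((-s * t ^ (-s - 1)) / s - (-s' * t ^ (-s' - 1)) / s') t := by
      intro t ht
      exact ((Real.hasDerivAt_rpow_const (Or.inl ht.ne')).div_const _).sub
        ((Real.hasDerivAt_rpow_const (Or.inl ht.ne')).div_const _)
    apply antitoneOn_of_deriv_nonpos (convex_Ici 1)
    · intro t ht
      exact (hd t (lt_of_lt_of_le one_pos ht)).continuousAt.continuousWithinAt
    · intro t ht
      rw [interior_Ici] at ht
      exact (hd t (lt_trans one_pos ht)).differentiableAt.differentiableWithinAt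
    · intro t ht
      rw [interior_Ici] at ht
      have ht' : (1:ℝ) < t := ht
      rw [(hd t (lt_trans one_pos ht)).deriv]
      have e1 : (-s * t ^ (-s - 1)) / s = - t ^ (-s - 1) := by field_simp
      have e2 : (-s' * t ^ (-s' - 1)) / s' = - t ^ (-s' - 1) := by
        have : s' ≠ 0 := by linarith
        field_simp
      rw [e1, e2]
      have : t ^ (-s' - 1) ≤ t ^ (-s - 1) := Real.rpow_le_rpow_of_exponent_le ht'.le (by linarith)
      linarith
  intro i j hij
  exact h (by simp) (by simp) (by exact_mod_cast Nat.succ_le_succ hij)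

lemma rpow_diff_nonneg {s s' : ℝ} (hs : 1 ≤ s) (hss : s ≤ s') (i : ℕ) :
    0 ≤ ((i+1:ℕ) : ℝ) ^ (-s) / s - ((i+1:ℕ) : ℝ) ^ (-s') / s' := by
  have h1 : ((i+1:ℕ) : ℝ) ^ (-s') ≤ ((i+1:ℕ) : ℝ) ^ (-s) :=
    Real.rpow_le_rpow_of_exponent_le (by simp) (by linarith)
  have : ((i+1:ℕ) : ℝ) ^ (-s') / s' ≤ ((i+1:ℕ) : ℝ) ^ (-s) / s := by gcongr
  linarith

lemma LS_bound {p : ℕ} [hp : Fact p.Prime] (χ : DirichletCharacter ℂ p) (hχ : χ ≠ 1) {s : ℝ} (hs : 1 < s) :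
    ‖LSeries (fun n => χ n) s‖ ≤ p := by
  refine le_of_tendsto (LS_hasSum χ hs).tendsto_sum_nat.norm (Eventually.of_forall fun n => ?_)
  refine (abel_bound _ (fun i : ℕ => ((i+1:ℕ) : ℝ) ^ (-s)) p (char_sum_bound χ hχ) ?_ (fun n => by positivity) n).trans ?_
  · intro i j hij
    exact Real.rpow_le_rpow_of_nonpos (by positivity) (by exact_mod_cast Nat.succ_le_succ hij) (by linarith)
  · simp

lemma LS_lip {p : ℕ} [hp : Fact p.Prime] (χ : DirichletCharacter ℂ p) (hχ : χ ≠ 1) {s s' : ℝ} (hs : 1 < s) (hss : s ≤ s') :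
    ‖LSeries (fun n => χ n) s / s - LSeries (fun n => χ n) s' / s'‖ ≤ p * (s' - s) := by
  have h := ((LS_hasSum χ hs).div_const (s:ℂ)).sub ((LS_hasSum χ (hs.trans_le hss)).div_const (s':ℂ))
  refine le_of_tendsto h.tendsto_sum_nat.norm (Eventually.of_forall fun n => ?_)
  have h2 := abel_bound _ _ p (char_sum_bound χ hχ) (rpow_diff_antitone hs.le hss) (rpow_diff_nonneg hs.le hss) n
  refine le_trans (le_of_eq ?_) (h2.trans ?_)
  · congr 1; apply Finset.sum_congr rfl; intro i _; push_cast; ring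
  · refine mul_le_mul_of_nonneg_left ?_ (Nat.cast_nonneg _)
    simp only [zero_add, Nat.cast_one, Real.one_rpow]
    rw [div_sub_div _ _ (by linarith) (by linarith), div_le_iff₀ (by nlinarith)]
    nlinarith [mul_nonneg (sub_nonneg.2 hss) (sub_nonneg.2 (by nlinarith : 1 ≤ s * s'))]


lemma geom_S_sq {x : ℝ} (hx : 0 < x) (d : ℕ) :
    ((d : ℝ) + 1) * (√x) ^ d ≤ ∑ i ∈ Finset.range (d + 1), x ^ i := by
  set w := √x with hw
  have hw0 : 0 ≤ w := Real.sqrt_nonneg x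
  have hxw : x = w ^ 2 := (Real.sq_sqrt hx.le).symm
  have h1 := Finset.sum_range_reflect (fun i => x ^ i) (d + 1)
  have h2 : ∑ i ∈ Finset.range (d + 1), (2 * w ^ d) ≤
      ∑ i ∈ Finset.range (d + 1), (x ^ i + x ^ (d + 1 - 1 - i)) := by
    apply Finset.sum_le_sum
    intro i hi
    have hi' : i ≤ d := by simpa [Nat.lt_succ_iff] using hi
    have e : w ^ d = w ^ i * w ^ (d - i) := by rw [← pow_add]; congr 1; omega
    have q : ∀ k : ℕ, x ^ k = (w ^ k) ^ 2 := fun k => by rw [hxw, ← pow_mul, ← pow_mul, mul_comm]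
    rw [q, q, e, Nat.add_sub_cancel]
    nlinarith [sq_nonneg (w ^ i - w ^ (d - i))]
  rw [Finset.sum_add_distrib, h1, Finset.sum_const, Finset.card_range, nsmul_eq_mul] at h2
  push_cast at h2
  linarith

lemma lambert_antitone {x : ℝ} (hx : 0 < x) (hx1 : x < 1) :
    Antitone (fun i : ℕ => 1 / ((i+1:ℕ):ℝ) - x ^ (i+1) / ∑ j ∈ Finset.range (i+1), x ^ j) := by
  apply antitone_nat_of_succ_le
  intro d
  have hS1 : 0 < ∑ j ∈ Finset.range (d+1), x ^ j := Finset.sum_pos (fun _ _ => by positivity) (by simp)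
  have hS2 : 0 < ∑ j ∈ Finset.range (d+1+1), x ^ j := Finset.sum_pos (fun _ _ => by positivity) (by simp)
  have g1 := geom_S_sq hx d
  have g2 := geom_S_sq hx (d+1)
  have e : ∑ j ∈ Finset.range (d+1+1), x ^ j = 1 + x * ∑ j ∈ Finset.range (d+1), x ^ j := by
    rw [Finset.sum_range_succ', Finset.mul_sum]; simp [pow_succ, mul_comm, add_comm]
  set S := ∑ j ∈ Finset.range (d+1), x ^ j
  set T := ∑ j ∈ Finset.range (d+1+1), x ^ j
  have hw0 : 0 ≤ √x := Real.sqrt_nonneg x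
  have hw1 : √x ≤ 1 := Real.sqrt_le_one.mpr hx1.le
  have key : ((d:ℝ)+1) * (d+2) * x ^ (d+1) ≤ S * T := by
    have : ((d:ℝ)+1) * (√x) ^ d * (((d+1:ℕ):ℝ)+1) * (√x)^(d+1) ≤ S * T := by
      calc _ = (((d:ℝ)+1) * (√x) ^ d) * ((((d+1:ℕ):ℝ)+1) * (√x)^(d+1)) := by ring
        _ ≤ S * T := by gcongr
    refine le_trans ?_ this
    have hx2 : x ^ (d+1) = (√x) ^ (d+1) * (√x) ^ (d+1) := by
      rw [← mul_pow, Real.mul_self_sqrt hx.le]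
    have h3 : (√x) ^ (d+1) ≤ (√x) ^ d := pow_le_pow_of_le_one hw0 hw1 (Nat.le_succ d)
    have h4 : x ^ (d+1) ≤ (√x) ^ d * (√x) ^ (d+1) := by rw [hx2]; gcongr
    push_cast
    calc ((d:ℝ)+1) * (d+2) * x ^ (d+1) ≤ ((d:ℝ)+1) * (d+2) * ((√x) ^ d * (√x) ^ (d+1)) := by gcongr
      _ = _ := by ring
  have e1 : 1 / ((d+1:ℕ):ℝ) - 1 / ((d+1+1:ℕ):ℝ) = 1 / (((d:ℝ)+1) * (d+2)) := by
    push_cast; field_simp; ring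
  have e2 : x ^ (d+1) / S - x ^ (d+1+1) / T = x ^ (d+1) / (S * T) := by
    field_simp
    rw [e]; ring
  have : x ^ (d+1) / (S * T) ≤ 1 / (((d:ℝ)+1) * (d+2)) := by
    rw [div_le_div_iff₀ (by positivity) (by positivity)]; linarith
  linarith

lemma lambert_nonneg {x : ℝ} (hx : 0 < x) (hx1 : x < 1) (i : ℕ) :
    0 ≤ 1 / ((i+1:ℕ):ℝ) - x ^ (i+1) / ∑ j ∈ Finset.range (i+1), x ^ j := by
  have hS1 : 0 < ∑ j ∈ Finset.range (i+1), x ^ j := Finset.sum_pos (fun _ _ => by positivity) (by simp)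
  have : ∑ j ∈ Finset.range (i+1), x ^ (i+1) ≤ ∑ j ∈ Finset.range (i+1), x ^ j := by
    apply Finset.sum_le_sum; intro j hj
    exact pow_le_pow_of_le_one hx.le hx1.le (by simp at hj; omega)
  rw [Finset.sum_const, Finset.card_range, nsmul_eq_mul] at this
  rw [sub_nonneg, div_le_div_iff₀ hS1 (by positivity)]
  linarith

lemma zetaMul_apply' {p : ℕ} (χ : DirichletCharacter ℂ p) (n : ℕ) :
    DirichletCharacter.zetaMul χ n = ∑ i ∈ n.divisors, χ ((i : ℕ) : ZMod p) := by
  rw [DirichletCharacter.zetaMul, ArithmeticFunction.coe_zeta_mul_apply]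
  apply Finset.sum_congr rfl
  intro i hi
  have : i ≠ 0 := (Nat.pos_of_mem_divisors hi).ne'
  show (if i = 0 then 0 else χ i) = _
  rw [if_neg this]

lemma zetaMul_prime_pow_self {p : ℕ} [hp : Fact p.Prime] (χ : DirichletCharacter ℂ p) (j : ℕ) :
    DirichletCharacter.zetaMul χ (p ^ j) = 1 := by
  rw [zetaMul_apply', Nat.sum_divisors_prime_pow hp.out, Finset.sum_range_succ', Finset.sum_eq_zero]
  · simp
  · intro i _
    simp [MulChar.map_zero]

lemma lambert_sum {p : ℕ} [hp : Fact p.Prime] (χ : DirichletCharacter ℂ p) (hχ : χ ^ 2 = 1)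
    {x : ℝ} (hx : 0 < x) (hx1 : x < 1) (J : ℕ) :
    ∃ F : ℂ, HasSum (fun i : ℕ => χ ((i + 1 : ℕ) : ZMod p) * ((x ^ (i+1) / (1 - x ^ (i+1)) : ℝ) : ℂ)) F ∧
      ∑ j ∈ Finset.range J, x ^ (p ^ j) ≤ F.re := by
  have hxn : ‖(x:ℂ)‖ < 1 := by rw [Complex.norm_real, Real.norm_of_nonneg hx.le]; exact hx1
  set g : ℕ+ × ℕ+ → ℂ := fun c => χ ((c.1 : ℕ) : ZMod p) * (x:ℂ) ^ (c.1 * c.2 : ℕ) with hg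
  have hgs : Summable g := by
    have h := (summable_prod_mul_pow 0 hxn).norm
    refine Summable.of_norm_bounded h ?_
    intro c
    simp only [hg, norm_mul, pow_zero, norm_one, one_mul]
    calc _ ≤ 1 * ‖(x:ℂ) ^ (c.1 * c.2 : ℕ)‖ := by
          gcongr; exact DirichletCharacter.norm_le_one _ _
      _ = _ := one_mul _
  have hgeo : ∀ d : ℕ+, HasSum (fun c : ℕ+ => g (d, c)) (χ ((d : ℕ) : ZMod p) * ((x ^ (d:ℕ) / (1 - x ^ (d:ℕ)) : ℝ) : ℂ)) := by
    intro d
    have hd : x ^ (d:ℕ) < 1 := pow_lt_one₀ hx.le hx1 d.ne_zero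
    have h1 := (hasSum_geometric_of_lt_one (pow_nonneg hx.le d) hd).mul_left (x ^ (d:ℕ))
    have h2 : HasSum (fun c : ℕ+ => x ^ (d * c : ℕ)) (x ^ (d:ℕ) / (1 - x ^ (d:ℕ))) := by
      rw [← Equiv.pnatEquivNat.symm.hasSum_iff, div_eq_mul_inv]
      have e0 : (fun c : ℕ+ => x ^ (d * c : ℕ)) ∘ Equiv.pnatEquivNat.symm = fun c : ℕ => x ^ (d:ℕ) * (x ^ (d:ℕ)) ^ c := by
        funext c
        show x ^ ((d:ℕ) * (c + 1)) = _
        rw [← pow_mul, ← pow_add]; ring_nf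
      rw [e0]; exact h1
    have h3 := (Complex.hasSum_ofReal.mpr h2).mul_left (χ ((d : ℕ) : ZMod p))
    simpa [hg] using h3
  refine ⟨∑' c, g c, ?_, ?_⟩
  · have h1 := hgs.hasSum.prod_fiberwise hgeo
    rw [← Equiv.pnatEquivNat.symm.hasSum_iff] at h1
    exact h1
  · have h2 : HasSum (fun n : ℕ+ => DirichletCharacter.zetaMul χ n * (x:ℂ) ^ (n:ℕ)) (∑' c, g c) := by
      have h3 := sigmaAntidiagonalEquivProd.hasSum_iff.mpr hgs.hasSum
      refine h3.sigma (fun n => ?_)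
      have : DirichletCharacter.zetaMul χ n * (x:ℂ) ^ (n:ℕ) = ∑ a : Nat.divisorsAntidiagonal (n:ℕ), χ ((a.1.1 : ℕ) : ZMod p) * (x:ℂ) ^ (n:ℕ) := by
        rw [zetaMul_apply', Finset.sum_coe_sort (Nat.divisorsAntidiagonal (n:ℕ)) (fun a => χ ((a.1 : ℕ) : ZMod p) * (x:ℂ) ^ (n:ℕ)), Nat.sum_divisorsAntidiagonal (fun a _ => χ ((a : ℕ) : ZMod p) * (x:ℂ) ^ (n:ℕ)), Finset.sum_mul]
      rw [this]
      convert hasSum_fintype _ using 2 with a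
      simp only [hg, Function.comp, sigmaAntidiagonalEquivProd, divisorsAntidiagonalFactors, Equiv.coe_fn_mk, PNat.mk_coe]
      have := (Nat.mem_divisorsAntidiagonal.mp a.2).1
      rw [this]
    have h4 := Complex.hasSum_re h2
    have hnn : ∀ n : ℕ, 0 ≤ (DirichletCharacter.zetaMul χ n * (x:ℂ) ^ (n:ℕ)).re := by
      intro n
      have h5 := DirichletCharacter.zetaMul_nonneg hχ n
      rw [← Complex.ofReal_pow, Complex.re_mul_ofReal]
      have := (Complex.le_def.mp h5).1
      simp at this
      positivity
    set P : ℕ+ := ⟨p, hp.out.pos⟩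
    have h6 := sum_le_hasSum ((Finset.range J).image (fun j => P ^ j)) (fun n _ => hnn n) h4
    rw [Finset.sum_image] at h6
    · refine le_trans (le_of_eq (Finset.sum_congr rfl fun j _ => ?_)) h6
      rw [PNat.pow_coe]
      show _ = (DirichletCharacter.zetaMul χ (p ^ j) * _).re
      rw [zetaMul_prime_pow_self, one_mul, ← Complex.ofReal_pow, Complex.ofReal_re]
      rfl
    · intro a _ b _ hab
      have : p ^ a = p ^ b := by
        have := congrArg PNat.val hab
        simp only [] at this
        rw [PNat.pow_coe, PNat.pow_coe] at this
        exact this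
      exact Nat.pow_right_injective hp.out.two_le this

lemma LS_real_lower {p : ℕ} [hp : Fact p.Prime] (χ : DirichletCharacter ℂ p) (hχ : χ ≠ 1) (hχ2 : χ ^ 2 = 1)
    {s : ℝ} (hs : 1 < s) (J : ℕ) (hJ : 0 < J) :
    ((p:ℝ) ^ J)⁻¹ * ((J:ℝ) / 2 - p) ≤ ‖LSeries (fun n => χ n) s / s‖ + p * (s - 1) := by
  have hp1 : (1:ℝ) < p := by exact_mod_cast hp.out.one_lt
  have hp2 : (2:ℝ) ≤ p := by exact_mod_cast hp.out.two_le
  have hpJ : 1 < (p:ℝ) ^ J := one_lt_pow₀ hp1 hJ.ne'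
  set e := ((p:ℝ) ^ J)⁻¹ with he
  have he0 : 0 < e := by positivity
  have he1 : e < 1 := inv_lt_one_of_one_lt₀ hpJ
  set x := 1 - e with hx
  have hx0 : 0 < x := by linarith
  have hx1 : x < 1 := by linarith
  obtain ⟨F, hF, hFJ⟩ := lambert_sum χ hχ2 hx0 hx1 J
  have hFJ2 : (J:ℝ) / 2 ≤ F.re := by
    refine le_trans ?_ hFJ
    calc (J:ℝ)/2 = ∑ j ∈ Finset.range J, (1/2:ℝ) := by simp; ring
      _ ≤ _ := by
        apply Finset.sum_le_sum
        intro j hj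
        have hj' : j + 1 ≤ J := by simpa using hj
        have hb := one_add_mul_le_pow (a := -e) (by linarith) (p ^ j)
        have : (1:ℝ) + -e = x := by rw [hx]; ring
        rw [this] at hb
        have h3 : ((p ^ j : ℕ):ℝ) * e ≤ 1/2 := by
          rw [he, ← div_eq_mul_inv, div_le_div_iff₀ (by positivity) (by norm_num)]
          push_cast
          calc (p:ℝ)^j * 2 ≤ (p:ℝ)^j * p := by gcongr
            _ = (p:ℝ)^(j+1) := by ring
            _ ≤ (p:ℝ)^J := pow_le_pow_right₀ hp1.le hj'
            _ = _ := by ring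
        linarith
  have hlim : ‖LSeries (fun n => χ n) s / s - e * F‖ ≤ p * (s - 1) + p * e := by
    have h := ((LS_hasSum χ hs).div_const (s:ℂ)).sub (hF.mul_left (e:ℂ))
    refine le_of_tendsto h.tendsto_sum_nat.norm (Eventually.of_forall fun n => ?_)
    have h2 := abel_bound _ _ p (char_sum_bound χ hχ) (rpow_diff_antitone le_rfl hs.le) (rpow_diff_nonneg le_rfl hs.le) n
    have h3 := abel_bound _ _ p (char_sum_bound χ hχ) (lambert_antitone hx0 hx1) (lambert_nonneg hx0 hx1) n
    have e1 : ∑ b ∈ Finset.range n, (χ ((b + 1 : ℕ) : ZMod p) * (((((b+1:ℕ) : ℝ) ^ (-s)) : ℝ) : ℂ) / s - e * (χ ((b + 1 : ℕ) : ZMod p) * ((x ^ (b+1) / (1 - x ^ (b+1)) : ℝ) : ℂ))) =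
        ∑ i ∈ Finset.range n, χ ((i + 1 : ℕ) : ZMod p) * ((1 / ((i+1:ℕ):ℝ) - x ^ (i+1) / ∑ j ∈ Finset.range (i+1), x ^ j : ℝ) : ℂ) -
        ∑ i ∈ Finset.range n, χ ((i + 1 : ℕ) : ZMod p) * ((((i+1:ℕ) : ℝ) ^ (-(1:ℝ)) / 1 - ((i+1:ℕ) : ℝ) ^ (-s) / s : ℝ) : ℂ) := by
      rw [← Finset.sum_sub_distrib]
      apply Finset.sum_congr rfl
      intro i _
      have h5 : x ^ (i+1) / ∑ j ∈ Finset.range (i+1), x ^ j = e * (x ^ (i+1) / (1 - x ^ (i+1))) := by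
        have h6 : (∑ j ∈ Finset.range (i+1), x ^ j) * e = 1 - x ^ (i+1) := by
          rw [show e = 1 - x by rw [hx]; ring]; exact geom_sum_mul_neg x (i+1)
        rw [← h6]; field_simp
      rw [h5, Real.rpow_neg_one]
      push_cast; ring
    rw [e1]
    refine (norm_sub_le _ _).trans ?_
    have h7 : 1 - 1 / s ≤ s - 1 := by
      rw [sub_le_iff_le_add, ← sub_le_iff_le_add', le_div_iff₀ (by linarith)]; nlinarith [sq_nonneg (s-1)]
    have h8 : (p:ℝ) * (1 / ((0+1:ℕ):ℝ) - x ^ (0+1) / ∑ j ∈ Finset.range (0+1), x ^ j) = p * e := by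
      simp [hx]
    have h9 : (p:ℝ) * (((0+1:ℕ) : ℝ) ^ (-(1:ℝ)) / 1 - ((0+1:ℕ) : ℝ) ^ (-s) / s) ≤ p * (s - 1) := by
      refine mul_le_mul_of_nonneg_left ?_ (Nat.cast_nonneg _)
      simpa using h7
    linarith
  have h10 : e * F.re ≤ ‖(e:ℂ) * F‖ := by
    rw [norm_mul, Complex.norm_real, Real.norm_of_nonneg he0.le]
    gcongr; exact Complex.re_le_norm F
  have h11 := norm_sub_norm_le ((e:ℂ) * F) (LSeries (fun n => χ n) s / s)
  rw [norm_sub_rev] at h11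
  nlinarith


lemma rpow_tele {t σ : ℝ} (ht : 0 < t) (hσ : 0 < σ) :
    (t+1) ^ (-(1+σ)) ≤ (t ^ (-σ) - (t+1) ^ (-σ)) / σ ∧ (t ^ (-σ) - (t+1) ^ (-σ)) / σ ≤ t ^ (-(1+σ)) := by
  have hd : ∀ u : ℝ, 0 < u → HasDerivAt (fun u : ℝ => -(u ^ (-σ) / σ)) (u ^ (-(1+σ))) u := by
    intro u hu
    have := ((Real.hasDerivAt_rpow_const (x := u) (p := -σ) (Or.inl hu.ne')).div_const σ).neg
    have e : u ^ (-(1+σ)) = -(-σ * u ^ (-σ - 1) / σ) := by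
      rw [show -(1+σ) = -σ - 1 by ring]; field_simp
    rw [e]; exact this
  obtain ⟨c, hc, hc2⟩ := exists_hasDerivAt_eq_slope (fun u : ℝ => -(u ^ (-σ) / σ)) (fun u => u ^ (-(1+σ))) (by linarith : t < t + 1)
    (fun u hu => (hd u (ht.trans_le hu.1)).continuousAt.continuousWithinAt) (fun u hu => hd u (ht.trans hu.1))
  have e : (t ^ (-σ) - (t+1) ^ (-σ)) / σ = c ^ (-(1+σ)) := by
    rw [hc2]; ring
  rw [e]
  exact ⟨Real.rpow_le_rpow_of_nonpos (ht.trans hc.1) hc.2.le (by linarith),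
    Real.rpow_le_rpow_of_nonpos ht hc.1.le (by linarith)⟩

lemma rpow_tele_hasSum {σ : ℝ} (hσ : 0 < σ) (a : ℕ) (ha : 0 < a) :
    HasSum (fun i : ℕ => (((i + a : ℕ):ℝ) ^ (-σ) - (((i + a : ℕ):ℝ)+1) ^ (-σ)) / σ) ((a:ℝ) ^ (-σ) / σ) := by
  rw [hasSum_iff_tendsto_nat_of_nonneg]
  · have h : ∀ n : ℕ, ∑ i ∈ Finset.range n, (((i + a : ℕ):ℝ) ^ (-σ) - (((i + a : ℕ):ℝ)+1) ^ (-σ)) / σ = ((a:ℝ) ^ (-σ) - ((n + a : ℕ):ℝ) ^ (-σ)) / σ := by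
      intro n
      rw [← Finset.sum_div]
      congr 1
      have := Finset.sum_range_sub' (fun i => ((i + a : ℕ):ℝ) ^ (-σ)) n
      simp only [zero_add] at this
      rw [← this]
      apply Finset.sum_congr rfl; intro i _; push_cast; ring_nf
    simp_rw [h]
    have : Tendsto (fun n : ℕ => ((n + a : ℕ):ℝ) ^ (-σ)) atTop (nhds 0) := by
      have h1 := (tendsto_rpow_neg_atTop hσ).comp (tendsto_natCast_atTop_atTop (R := ℝ))
      exact h1.comp (tendsto_add_atTop_nat a)
    simpa using (this.const_sub ((a:ℝ) ^ (-σ))).div_const σ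
  · intro i
    have h0 : (0:ℝ) < ((i + a : ℕ):ℝ) := by exact_mod_cast (by omega)
    exact le_trans (by positivity) (rpow_tele h0 hσ).1

lemma tail_summable {σ : ℝ} (hσ : 0 < σ) (a : ℕ) :
    Summable (fun i : ℕ => ((i + a : ℕ):ℝ) ^ (-(1+σ))) := by
  have : Summable (fun i : ℕ => (i:ℝ) ^ (-(1+σ))) := Real.summable_nat_rpow.mpr (by linarith)
  exact (summable_nat_add_iff a).mpr this

/-- tail bound -/
lemma tail_le {σ : ℝ} (hσ : 0 < σ) (a : ℕ) (ha : 0 < a) :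
    ∑' i : ℕ, ((i + (a+1) : ℕ):ℝ) ^ (-(1+σ)) ≤ (a:ℝ) ^ (-σ) / σ := by
  rw [← (rpow_tele_hasSum hσ a ha).tsum_eq]
  refine (tail_summable hσ (a+1)).tsum_le_tsum (fun i => ?_) (rpow_tele_hasSum hσ a ha).summable
  have h0 : (0:ℝ) < ((i + a : ℕ):ℝ) := by exact_mod_cast (by omega)
  have := (rpow_tele h0 hσ).1
  push_cast at this ⊢
  rwa [← add_assoc]

lemma zeta_ge {σ : ℝ} (hσ : 0 < σ) :
    1 / σ ≤ ∑' i : ℕ, ((i + 1 : ℕ):ℝ) ^ (-(1+σ)) := by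
  have h := rpow_tele_hasSum hσ 1 one_pos
  have e : 1 / σ = (((1:ℕ):ℝ) ^ (-σ) / σ) := by simp
  rw [e, ← h.tsum_eq]
  refine h.summable.tsum_le_tsum (fun i => ?_) (tail_summable hσ 1)
  have h0 : (0:ℝ) < ((i + 1 : ℕ):ℝ) := by positivity
  exact (rpow_tele h0 hσ).2

lemma zeta_le {σ : ℝ} (hσ : 0 < σ) :
    ∑' i : ℕ, ((i + 1 : ℕ):ℝ) ^ (-(1+σ)) ≤ 1 + 1 / σ := by
  rw [(tail_summable hσ 1).tsum_eq_zero_add]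
  have := tail_le hσ 1 one_pos
  simp only [Nat.cast_one, Real.one_rpow, zero_add] at this ⊢
  have h2 : ∀ i : ℕ, i + 1 + 1 = i + (1+1) := fun i => rfl
  linarith

lemma LS_triv_le {p : ℕ} (χ : DirichletCharacter ℂ p) {σ : ℝ} (hσ : 0 < σ) (hσ1 : σ ≤ 1) :
    ‖LSeries (fun n => χ n) ((1 + σ : ℝ) : ℂ)‖ ≤ 2 / σ := by
  have h := LS_hasSum χ (s := 1 + σ) (by linarith)
  have h2 : ‖LSeries (fun n => χ n) ((1 + σ : ℝ) : ℂ)‖ ≤ ∑' i : ℕ, ((i + 1 : ℕ):ℝ) ^ (-(1+σ)) := by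
    refine h.norm_le_of_bounded (tail_summable hσ 1).hasSum (fun i => ?_)
    rw [norm_mul, Complex.norm_real, Real.norm_of_nonneg (by positivity)]
    calc _ ≤ 1 * ((i + 1 : ℕ):ℝ) ^ (-(1+σ)) := by
          gcongr; exact DirichletCharacter.norm_le_one _ _
      _ = _ := one_mul _
  have h3 := zeta_le hσ
  have : 1 ≤ 1 / σ := by rw [le_div_iff₀ hσ]; linarith
  have : 2 / σ = 1 / σ + 1 / σ := by ring
  linarith

lemma LS_triv_ge {p : ℕ} [hp : Fact p.Prime] {σ : ℝ} (hσ : 0 < σ) (hσ1 : σ ≤ 1) :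
    1 / (p ^ 2 * σ) ≤ ‖LSeries (fun n => (1 : DirichletCharacter ℂ p) n) ((1 + σ : ℝ) : ℂ)‖ := by
  have h := Complex.hasSum_re (LS_hasSum (1 : DirichletCharacter ℂ p) (s := 1 + σ) (by linarith))
  refine le_trans ?_ (Complex.re_le_norm _)
  rw [← h.tsum_eq]
  have hp0 : (0:ℝ) < p := by exact_mod_cast hp.out.pos
  have hp1 : (1:ℝ) ≤ p := by exact_mod_cast hp.out.one_le
  have hval : ∀ a : ZMod p, (1 : DirichletCharacter ℂ p) a = if a = 0 then 0 else 1 := by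
    intro a
    split_ifs with ha
    · rw [ha]; exact MulChar.map_zero _
    · exact MulChar.one_apply (IsUnit.mk0 a ha)
  have hnn : ∀ i : ℕ, 0 ≤ ((1 : DirichletCharacter ℂ p) ((i + 1 : ℕ) : ZMod p) * (((((i+1:ℕ) : ℝ) ^ (-(1+σ))) : ℝ) : ℂ)).re := by
    intro i
    rw [Complex.re_mul_ofReal, hval]
    split_ifs <;> simp <;> positivity
  have hinj : Function.Injective (fun k : ℕ => p * k) := fun a b hab => Nat.eq_of_mul_eq_mul_left hp.out.pos hab
  have h1 : 1 / (p ^ 2 * σ) ≤ (p:ℝ) ^ (-(1+σ)) * ∑' i : ℕ, ((i + 1 : ℕ):ℝ) ^ (-(1+σ)) := by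
    have : 1 / ((p:ℝ) ^ 2 * σ) = (p:ℝ) ^ (-(2:ℝ)) * (1 / σ) := by
      rw [Real.rpow_neg hp0.le]; norm_num; ring
    rw [this]
    apply mul_le_mul _ (zeta_ge hσ) (by positivity) (by positivity)
    exact Real.rpow_le_rpow_of_exponent_le hp1 (by linarith)
  refine h1.trans ?_
  rw [← tsum_mul_left]
  refine Summable.tsum_le_tsum_of_inj (fun k : ℕ => p * k) hinj (fun c _ => hnn c) (fun k => ?_) ((tail_summable hσ 1).mul_left _) h.summable
  have : (1 : DirichletCharacter ℂ p) ((p * k + 1 : ℕ) : ZMod p) = 1 := by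
    push_cast; simp
  rw [this, one_mul, Complex.ofReal_re, ← Real.mul_rpow hp0.le (by positivity)]
  apply Real.rpow_le_rpow_of_nonpos (by positivity) _ (by linarith)
  push_cast; nlinarith

lemma primes_sq_summable : Summable (fun q : Nat.Primes => 1 / ((q:ℕ):ℝ) ^ 2) := by
  have h : Summable (fun n : ℕ => 1 / (n:ℝ) ^ 2) := HasSum.summable hasSum_zeta_two
  exact h.comp_injective Nat.Primes.coe_nat_injective

lemma primes_sq_tsum : ∑' q : Nat.Primes, 1 / ((q:ℕ):ℝ) ^ 2 ≤ 2 := by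
  have h : Summable (fun n : ℕ => 1 / (n:ℝ) ^ 2) := HasSum.summable hasSum_zeta_two
  have h1 : ∑' q : Nat.Primes, 1 / ((q:ℕ):ℝ) ^ 2 ≤ ∑' n : ℕ, 1 / (n:ℝ) ^ 2 :=
    Summable.tsum_le_tsum_of_inj (fun q : Nat.Primes => (q:ℕ)) Nat.Primes.coe_nat_injective
      (fun n _ => by positivity) (fun q => le_rfl) primes_sq_summable h
  rw [HasSum.tsum_eq hasSum_zeta_two] at h1
  have : Real.pi ^ 2 / 6 ≤ 2 := by nlinarith [Real.pi_lt_d2, Real.pi_pos]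
  exact h1.trans this

lemma tsum_close {ι : Type*} {A T b : ι → ℝ} {c : ℝ} (hA : Summable A) (hT : Summable T) (hc : 0 ≤ c)
    (hbd : ∀ q, |A q - c * T q| ≤ c * b q) (hb : Summable b) (hb2 : ∑' q, b q ≤ 2) :
    ∃ R : ℝ, |R| ≤ 2 * c ∧ ∑' q, A q = c * ∑' q, T q + R := by
  refine ⟨∑' q, (A q - c * T q), ?_, ?_⟩
  · have hs2 : Summable (fun q => ‖A q - c * T q‖) := (hA.sub (hT.mul_left _)).abs
    rw [← Real.norm_eq_abs]
    refine (norm_tsum_le_tsum_norm hs2).trans ?_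
    refine (hs2.tsum_le_tsum hbd (hb.mul_left _)).trans ?_
    rw [tsum_mul_left, mul_comm 2]
    exact mul_le_mul_of_nonneg_left hb2 hc
  · rw [hA.tsum_sub (hT.mul_left _), tsum_mul_left]
    ring

set_option maxHeartbeats 1000000 in
lemma prod_LS {p : ℕ} [hp : Fact p.Prime] {s : ℝ} (hs : 1 < s) :
    ∃ R : ℝ, |R| ≤ 2 * (p - 1) ∧ ∏ χ : DirichletCharacter ℂ p, ‖LSeries (fun n => χ n) (s : ℂ)‖ =
      Real.exp ((p - 1) * (∑' q : Nat.Primes, if ((q : ℕ) : ZMod p) = 1 then ((q:ℕ):ℝ) ^ (-s) else 0) + R) := by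
  have hs' : 1 < (s:ℂ).re := by simpa using hs
  have hp1 : (1:ℝ) ≤ p := by exact_mod_cast hp.out.one_le
  have hcard : (Finset.univ : Finset (DirichletCharacter ℂ p)).card = p - 1 := by
    have := DirichletCharacter.card_eq_totient_of_hasEnoughRootsOfUnity ℂ p
    rw [Nat.totient_prime hp.out, Nat.card_eq_fintype_card] at this
    exact this
  set l : DirichletCharacter ℂ p → Nat.Primes → ℝ := fun χ q => (-Complex.log (1 - χ ((q:ℕ) : ZMod p) * ((q:ℕ):ℂ) ^ (-(s:ℂ)))).re with hl
  have hls : ∀ χ, Summable (l χ) := fun χ =>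
    (Complex.hasSum_re (DirichletCharacter.summable_neg_log_one_sub_mul_prime_cpow χ hs').hasSum).summable
  have hnorm : ∀ χ : DirichletCharacter ℂ p, ‖LSeries (fun n => χ n) (s : ℂ)‖ = Real.exp (∑' q, l χ q) := by
    intro χ
    rw [← DirichletCharacter.LSeries_eulerProduct_exp_log χ hs', Complex.norm_exp]
    congr 1
    exact (Complex.hasSum_re (DirichletCharacter.summable_neg_log_one_sub_mul_prime_cpow χ hs').hasSum).tsum_eq.symm
  simp_rw [hnorm]
  rw [← Real.exp_sum, ← Summable.tsum_finsetSum (fun χ _ => hls χ)]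
  set T : Nat.Primes → ℝ := fun q => if ((q : ℕ) : ZMod p) = 1 then ((q:ℕ):ℝ) ^ (-s) else 0 with hT
  have hTs : Summable T := by
    refine Summable.of_norm_bounded (Nat.Primes.summable_rpow.mpr (by linarith : -s < -1)) ?_
    intro q
    simp only [hT]
    split_ifs
    · rw [Real.norm_of_nonneg (by positivity)]
    · simp; positivity
  have hsum : Summable (fun q => ∑ χ : DirichletCharacter ℂ p, l χ q) := summable_sum (fun χ _ => hls χ)
  have hbd : ∀ q : Nat.Primes, |∑ χ : DirichletCharacter ℂ p, l χ q - (p - 1) * T q| ≤ (p - 1) * (1 / ((q:ℕ):ℝ) ^ 2) := by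
    intro q
    have hq2 : (2:ℝ) ≤ (q:ℕ) := by exact_mod_cast q.2.two_le
    have hq0 : (0:ℝ) < (q:ℕ) := by linarith
    have hcp : ((q:ℕ):ℂ) ^ (-(s:ℂ)) = (((((q:ℕ):ℝ) ^ (-s)) : ℝ) : ℂ) := by
      rw [Complex.ofReal_cpow hq0.le]; push_cast; rfl
    have hqs : ((q:ℕ):ℝ) ^ (-s) ≤ 1 / (q:ℕ) := by
      rw [one_div, ← Real.rpow_neg_one]
      exact Real.rpow_le_rpow_of_exponent_le (by linarith) (by linarith)
    have hchar : ∑ χ : DirichletCharacter ℂ p, (χ ((q:ℕ) : ZMod p) * ((q:ℕ):ℂ) ^ (-(s:ℂ))).re = (p - 1) * T q := by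
      rw [← Complex.re_sum, ← Finset.sum_mul, DirichletCharacter.sum_characters_eq, hcp, Complex.re_mul_ofReal]
      simp only [hT]
      split_ifs
      · rw [Nat.totient_prime hp.out, Nat.cast_sub hp.out.one_le]; simp
      · simp
    rw [← hchar, ← Finset.sum_sub_distrib]
    refine (Finset.abs_sum_le_sum_abs _ _).trans ?_
    have hc2 : ((p:ℝ) - 1) * (1 / ((q:ℕ):ℝ) ^ 2) = ∑ χ : DirichletCharacter ℂ p, (1 / ((q:ℕ):ℝ) ^ 2) := by
      rw [Finset.sum_const, hcard, nsmul_eq_mul, Nat.cast_sub hp.out.one_le]; simp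
    rw [hc2]
    apply Finset.sum_le_sum
    intro χ _
    set z := χ ((q:ℕ) : ZMod p) * ((q:ℕ):ℂ) ^ (-(s:ℂ)) with hz
    have hzn : ‖z‖ ≤ 1 / (q:ℕ) := by
      rw [hz, norm_mul, hcp, Complex.norm_real, Real.norm_of_nonneg (by positivity)]
      calc _ ≤ 1 * ((q:ℕ):ℝ) ^ (-s) := by gcongr; exact DirichletCharacter.norm_le_one _ _
        _ ≤ _ := by rw [one_mul]; exact hqs
    have hz2 : ‖z‖ ≤ 1 / 2 := hzn.trans (by gcongr)
    have h1 := Complex.norm_log_one_add_sub_self_le (z := -z) (by rw [norm_neg]; linarith)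
    have h2 : |l χ q - z.re| ≤ ‖Complex.log (1 + -z) - -z‖ := by
      have : l χ q - z.re = -((Complex.log (1 + -z) - -z).re) := by
        simp only [hl]; rw [← hz, ← sub_eq_add_neg, Complex.sub_re, Complex.neg_re, Complex.neg_re]; ring
      rw [this, abs_neg]; exact Complex.abs_re_le_norm _
    refine h2.trans (h1.trans ?_)
    rw [norm_neg]
    have h3 : (1 - ‖z‖)⁻¹ ≤ 2 := by
      rw [inv_le_comm₀ (by linarith) (by norm_num)]; linarith
    calc ‖z‖ ^ 2 * (1 - ‖z‖)⁻¹ / 2 ≤ (1 / ((q:ℕ):ℝ)) ^ 2 * 2 / 2 := by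
          have : 0 ≤ (1 - ‖z‖)⁻¹ := inv_nonneg.2 (by linarith)
          gcongr
      _ = _ := by ring
  obtain ⟨R, hR, hR2⟩ := tsum_close hsum hTs (by linarith) hbd primes_sq_summable primes_sq_tsum
  exact ⟨R, hR, by rw [hR2]⟩


lemma LS_inv_norm {p : ℕ} [hp : Fact p.Prime] (χ : DirichletCharacter ℂ p) {s : ℝ} (hs : 1 < s) :
    ‖LSeries (fun n => χ⁻¹ n) (s : ℂ)‖ = ‖LSeries (fun n => χ n) (s : ℂ)‖ := by
  have h := (LS_hasSum χ hs).star
  have h2 := LS_hasSum χ⁻¹ hs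
  have e : (fun i : ℕ => star (χ ((i + 1 : ℕ) : ZMod p) * (((((i+1:ℕ) : ℝ) ^ (-s)) : ℝ) : ℂ))) = (fun i : ℕ => χ⁻¹ ((i + 1 : ℕ) : ZMod p) * (((((i+1:ℕ) : ℝ) ^ (-s)) : ℝ) : ℂ)) := by
    funext i
    rw [← MulChar.star_eq_inv, star_mul', MulChar.star_apply]
    congr 1
    exact Complex.conj_ofReal _
  have h3 : HasSum (fun i : ℕ => χ⁻¹ ((i + 1 : ℕ) : ZMod p) * (((((i+1:ℕ) : ℝ) ^ (-s)) : ℝ) : ℂ)) (star (LSeries (fun n => χ n) (s : ℂ))) := e ▸ h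
  rw [h2.unique h3, norm_star]

noncomputable def TT (p : ℕ) (s : ℝ) : ℝ := ∑' q : Nat.Primes, if ((q : ℕ) : ZMod p) = 1 then ((q:ℕ):ℝ) ^ (-s) else 0

lemma TT_nonneg (p : ℕ) (s : ℝ) : 0 ≤ TT p s := by
  apply tsum_nonneg; intro q; split_ifs <;> positivity

lemma arith1 {p : ℕ} (hp : 2 ≤ p) : 3 * (p:ℝ) * ((p:ℝ)^(9*p))⁻¹ ≤ ((p:ℝ)^(4*p))⁻¹ * p := by
  have hp2 : (2:ℝ) ≤ p := by exact_mod_cast hp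
  have h : (3:ℝ) * p ^ (4*p) ≤ p ^ (9*p) := by
    calc (3:ℝ) * p ^ (4*p) ≤ p ^ 2 * p ^ (4*p) := by gcongr; nlinarith
      _ = p ^ (4*p+2) := by ring
      _ ≤ _ := pow_le_pow_right₀ (by linarith) (by omega)
  rw [← div_eq_mul_inv, div_le_iff₀ (by positivity)]
  have : ((p:ℝ)^(4*p))⁻¹ * p * p^(9*p) = p * (p^(9*p) / p^(4*p)) := by ring
  rw [this]
  have : 3 ≤ (p:ℝ)^(9*p) / p^(4*p) := by rw [le_div_iff₀ (by positivity)]; exact h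
  nlinarith

lemma exp_le_sq {p : ℕ} (hp : 2 ≤ p) : Real.exp 1 ≤ (p:ℝ)^2 := by
  have hp2 : (2:ℝ) ≤ p := by exact_mod_cast hp
  nlinarith [Real.exp_one_lt_d9]

lemma arith2 {p : ℕ} (hp : 2 ≤ p) : 16 * (p:ℝ)^2 * ((p:ℝ)^(9*p))⁻¹ * (2 * p^p) * Real.exp (2 * (p-1)) ≤ 1 := by
  have hp2 : (2:ℝ) ≤ p := by exact_mod_cast hp
  have h1 : Real.exp (2 * (p-1)) ≤ (p:ℝ)^(4*p) := by
    calc Real.exp (2 * (p-1)) ≤ Real.exp ((2*p:ℕ) * 1) := by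
          apply Real.exp_le_exp.2; push_cast; linarith
      _ = Real.exp 1 ^ (2*p) := by rw [Real.exp_nat_mul]
      _ ≤ ((p:ℝ)^2)^(2*p) := by gcongr; exact exp_le_sq hp
      _ = _ := by rw [← pow_mul]; congr 1; ring
  have h2 : (32:ℝ) ≤ p^5 := by
    calc (32:ℝ) = 2^5 := by norm_num
      _ ≤ _ := by gcongr
  have : 16 * (p:ℝ)^2 * ((p:ℝ)^(9*p))⁻¹ * (2 * p^p) * Real.exp (2 * (p-1)) = (32 * p^(p+2) * Real.exp (2 * (p-1))) / p^(9*p) := by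
    rw [div_eq_mul_inv]; ring
  rw [this, div_le_one (by positivity)]
  calc _ ≤ (p:ℝ)^5 * p^(p+2) * p^(4*p) := by gcongr
    _ = p^(5*p+7) := by ring
    _ ≤ _ := pow_le_pow_right₀ (by linarith) (by omega)

lemma dir_card {p : ℕ} [hp : Fact p.Prime] : (Finset.univ : Finset (DirichletCharacter ℂ p)).card = p - 1 := by
  have := DirichletCharacter.card_eq_totient_of_hasEnoughRootsOfUnity ℂ p
  rw [Nat.totient_prime hp.out, Nat.card_eq_fintype_card] at this
  exact this

/-- lower bound of nontrivial L-functions at the base point -/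
lemma LS_base_lower {p : ℕ} [hp : Fact p.Prime] (χ : DirichletCharacter ℂ p) (hχ : χ ≠ 1) {δ : ℝ}
    (hδ : δ = ((p:ℝ)^(9*p))⁻¹) :
    2 * p * δ ≤ ‖LSeries (fun n => χ n) ((1 + δ : ℝ) : ℂ) / ((1 + δ : ℝ) : ℂ)‖ := by
  have hp2 : (2:ℝ) ≤ p := by exact_mod_cast hp.out.two_le
  have hδ0 : 0 < δ := by rw [hδ]; positivity
  have hδ1 : δ ≤ 1 := by rw [hδ]; exact inv_le_one_of_one_le₀ (one_le_pow₀ (by linarith))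
  by_cases hq : χ ^ 2 = 1
  · have h := LS_real_lower χ hχ hq (s := 1 + δ) (by linarith) (4*p) (by have := hp.out.pos; omega)
    have h2 := arith1 hp.out.two_le
    rw [← hδ] at h2
    have h3 : ((4*p:ℕ):ℝ)/2 - p = p := by push_cast; ring
    rw [h3] at h
    have : (p:ℝ) * (1 + δ - 1) = p * δ := by ring
    linarith
  · have hne : χ⁻¹ ≠ χ := by
      intro h; apply hq; rw [sq]; nth_rewrite 1 [← h]; simp
    set f : DirichletCharacter ℂ p → ℝ := fun χ => ‖LSeries (fun n => χ n) ((1 + δ : ℝ) : ℂ)‖ with hf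
    have hf0 : ∀ χ, 0 ≤ f χ := fun χ => norm_nonneg _
    obtain ⟨R, hR, hprod⟩ := prod_LS (p := p) (s := 1 + δ) (by linarith)
    have hlow : Real.exp (-(2 * (p-1))) ≤ ∏ χ, f χ := by
      rw [hprod]
      apply Real.exp_le_exp.2
      have := (abs_le.1 hR).1
      have h2 : 0 ≤ ((p:ℝ)-1) * TT p (1+δ) := mul_nonneg (by linarith) (TT_nonneg _ _)
      unfold TT at h2
      linarith
    have hup : ∏ χ, f χ ≤ f χ ^ 2 * (2 / δ * p ^ p) := by
      rw [← Finset.mul_prod_erase _ _ (Finset.mem_univ χ), ← Finset.mul_prod_erase _ f (a := χ⁻¹) (by simp [hne]),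
        ← Finset.mul_prod_erase _ f (a := 1) (by
          simp only [Finset.mem_erase, Finset.mem_univ, and_true]
          exact ⟨fun h => hχ (inv_eq_one.1 h.symm), fun h => hχ h.symm⟩)]
      have e : f χ⁻¹ = f χ := LS_inv_norm χ (by linarith)
      rw [e, ← mul_assoc, ← sq]
      apply mul_le_mul_of_nonneg_left _ (by positivity)
      apply mul_le_mul (LS_triv_le _ hδ0 hδ1) _ (Finset.prod_nonneg (fun _ _ => hf0 _)) (by positivity)
      refine (Finset.prod_le_prod (fun _ _ => hf0 _) (g := fun _ => (p:ℝ)) ?_).trans ?_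
      · intro ψ hψ
        exact LS_bound ψ (by simp at hψ; tauto) (by linarith)
      · rw [Finset.prod_const]
        apply pow_le_pow_right₀ (by linarith)
        refine (Finset.card_le_univ _).trans ?_
        have := dir_card (p := p)
        rw [Finset.card_univ] at this
        omega
    have h3 := hlow.trans hup
    have h4 := arith2 hp.out.two_le
    rw [← hδ] at h4
    rw [Real.exp_neg] at h3
    have hX : 0 < Real.exp (2 * ((p:ℝ)-1)) := Real.exp_pos _
    set X := Real.exp (2 * ((p:ℝ)-1))
    have h5 : (4 * p * δ)^2 ≤ f χ ^ 2 := by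
      rw [inv_le_iff_one_le_mul₀' hX] at h3
      have h6 : 16 * (p:ℝ)^2 * δ * (2 * p^p) * X ≤ X * (f χ ^ 2 * (2 / δ * p ^ p)) := h4.trans h3
      have h7 : X * (f χ ^ 2 * (2 / δ * p ^ p)) = f χ ^ 2 / δ * (2 * p^p * X) := by ring
      have h8 : (16 * (p:ℝ)^2 * δ) ≤ f χ ^ 2 / δ := by
        apply le_of_mul_le_mul_right _ (by positivity : 0 < 2 * (p:ℝ)^p * X)
        linarith
      rw [le_div_iff₀ hδ0] at h8
      nlinarith
    have h6 : 4 * p * δ ≤ f χ := by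
      apply le_of_sq_le_sq h5 (hf0 _)
    rw [norm_div, Complex.norm_real, Real.norm_of_nonneg (by linarith), le_div_iff₀ (by linarith)]
    have : 2 * p * δ * (1 + δ) ≤ 2 * p * δ * 2 := by gcongr; linarith
    change _ ≤ f χ
    linarith

lemma TT_lower {p : ℕ} [hp : Fact p.Prime] {σ : ℝ} (hσ : 0 < σ) (hσ2 : σ ≤ ((p:ℝ)^(9*p))⁻¹) :
    Real.log (1 / σ) - 20 * p * Real.log p ≤ (p - 1) * TT p (1 + σ) := by
  set δ : ℝ := ((p:ℝ)^(9*p))⁻¹ with hδ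
  have hp2 : (2:ℝ) ≤ p := by exact_mod_cast hp.out.two_le
  have hδ0 : 0 < δ := by rw [hδ]; positivity
  have hδ1 : δ ≤ 1 := by rw [hδ]; exact inv_le_one_of_one_le₀ (one_le_pow₀ (by linarith))
  set f : ℝ → DirichletCharacter ℂ p → ℝ := fun s χ => ‖LSeries (fun n => χ n) ((s : ℝ) : ℂ)‖ with hf
  have hf0 : ∀ s χ, 0 ≤ f s χ := fun s χ => norm_nonneg _
  have hcomp : ∀ χ, χ ≠ 1 → f (1+δ) χ / 4 ≤ f (1+σ) χ := by
    intro χ hχ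
    have h1 := LS_base_lower χ hχ hδ
    have h2 := LS_lip χ hχ (s := 1+σ) (s' := 1+δ) (by linarith) (by linarith)
    have e1 : ∀ t : ℝ, 0 < t → ‖LSeries (fun n => χ n) ((1 + t : ℝ) : ℂ) / ((1 + t : ℝ) : ℂ)‖ = f (1+t) χ / (1+t) := by
      intro t ht
      rw [norm_div, Complex.norm_real, Real.norm_of_nonneg (by linarith)]
    have h3 := (norm_sub_norm_le (LSeries (fun n => χ n) ((1 + δ : ℝ) : ℂ) / ((1 + δ : ℝ) : ℂ)) (LSeries (fun n => χ n) ((1 + σ : ℝ) : ℂ) / ((1 + σ : ℝ) : ℂ)))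
    rw [norm_sub_rev] at h3
    have h4 : (p:ℝ) * (1 + δ - (1 + σ)) ≤ p * δ := by gcongr; linarith
    rw [e1 δ hδ0, e1 σ hσ] at h3
    rw [e1 δ hδ0] at h1
    have h5 : f (1+δ) χ / 2 ≤ f (1+δ) χ / (1+δ) := by
      apply div_le_div_of_nonneg_left (hf0 _ _) (by linarith) (by linarith)
    have h6 : f (1+σ) χ / (1+σ) ≤ f (1+σ) χ := div_le_self (hf0 _ _) (by linarith)
    linarith
  obtain ⟨R, hR, hprod⟩ := prod_LS (p := p) (s := 1 + δ) (by linarith)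
  obtain ⟨R', hR', hprod'⟩ := prod_LS (p := p) (s := 1 + σ) (by linarith)
  change ∏ χ, f (1+δ) χ = Real.exp (_ * TT p (1+δ) + R) at hprod
  change ∏ χ, f (1+σ) χ = Real.exp (_ * TT p (1+σ) + R') at hprod'
  have hlow : Real.exp (-(2 * (p-1))) ≤ ∏ χ, f (1+δ) χ := by
    rw [hprod]
    apply Real.exp_le_exp.2
    have := (abs_le.1 hR).1
    have h2 : 0 ≤ ((p:ℝ)-1) * TT p (1+δ) := mul_nonneg (by linarith) (TT_nonneg _ _)
    linarith
  rw [← Finset.mul_prod_erase _ _ (Finset.mem_univ 1)] at hlow hprod'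
  set P := ∏ χ ∈ Finset.univ.erase 1, f (1+δ) χ with hP
  set Q := ∏ χ ∈ Finset.univ.erase 1, f (1+σ) χ with hQ
  have hP0 : 0 ≤ P := Finset.prod_nonneg (fun _ _ => hf0 _ _)
  have hPQ : P / 4 ^ p ≤ Q := by
    have h1 : ∏ χ ∈ (Finset.univ.erase (1 : DirichletCharacter ℂ p)), (f (1+δ) χ / 4) ≤ Q := by
      apply Finset.prod_le_prod
      · intro χ _; have := hf0 (1+δ) χ; positivity
      · intro χ hχ; exact hcomp χ (Finset.ne_of_mem_erase hχ)
    rw [Finset.prod_div_distrib, Finset.prod_const] at h1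
    refine le_trans ?_ h1
    apply div_le_div_of_nonneg_left hP0 (by positivity)
    apply pow_le_pow_right₀ (by norm_num)
    refine (Finset.card_le_univ _).trans ?_
    have := dir_card (p := p)
    rw [Finset.card_univ] at this
    omega
  have h1 : Real.exp (-(2 * (p-1))) ≤ 2 / δ * P := hlow.trans (by
    gcongr; exact LS_triv_le _ hδ0 hδ1)
  have h2 : 1 / (p ^ 2 * σ) * (Real.exp (-(2 * (p-1))) * (δ / 2) / 4 ^ p) ≤ Real.exp ((p-1) * TT p (1+σ) + R') := by
    rw [← hprod']
    apply mul_le_mul (LS_triv_ge hσ (by linarith)) _ (by positivity) (hf0 _ _)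
    refine le_trans ?_ hPQ
    gcongr
    calc _ ≤ 2 / δ * P * (δ / 2) := by gcongr
      _ = P := by field_simp
  have h3 := Real.log_le_log (by positivity) h2
  rw [Real.log_exp, Real.log_mul (by positivity) (by positivity), Real.log_div (by positivity) (by positivity),
    Real.log_div (by positivity) (by positivity), Real.log_mul (by positivity) (by positivity), Real.log_mul (by positivity) (by positivity),
    Real.log_exp, Real.log_div (by positivity) (by positivity), Real.log_pow, Real.log_pow, hδ, Real.log_inv, Real.log_pow,
    Real.log_one] at h3
  have hR2 := (abs_le.1 hR').2
  rw [one_div, Real.log_inv]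
  have hl2 : Real.log 2 ≤ Real.log p := Real.log_le_log (by norm_num) hp2
  have hl4 : Real.log 4 = 2 * Real.log 2 := by
    rw [show (4:ℝ) = 2^2 by norm_num, Real.log_pow]; norm_num
  have hl := Real.log_two_gt_d9
  rw [hl4] at h3
  push_cast at h3
  have a1 : (p:ℝ) * Real.log 2 ≤ p * Real.log p := by gcongr
  have a2 : 2 * Real.log p ≤ p * Real.log p := by gcongr
  have a3 : (p:ℝ) * 0.69 ≤ p * Real.log p := by gcongr; linarith
  linarith


/-- sum of `1/q` over primes `q ≤ z`, `q ≡ 1 mod p` -/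
noncomputable def EE (p z : ℕ) : ℝ := ∑ q ∈ (Finset.range (z+1)).filter (fun q => q.Prime ∧ p ∣ q - 1), (1:ℝ) / q

lemma cast_eq_one_iff {p q : ℕ} (hq : 1 ≤ q) : ((q : ℕ) : ZMod p) = 1 ↔ p ∣ q - 1 := by
  rw [← Nat.modEq_iff_dvd' hq, ← ZMod.natCast_eq_natCast_iff]
  rw [Nat.cast_one, eq_comm]

lemma TT_le {p z : ℕ} {σ : ℝ} (hσ : 0 < σ) (hz : 0 < z) :
    TT p (1 + σ) ≤ EE p z + (z:ℝ) ^ (-σ) / σ := by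
  set g : ℕ → ℝ := fun n => if n.Prime ∧ p ∣ n - 1 then (n:ℝ) ^ (-(1+σ)) else 0 with hg
  have hgle : ∀ n, g n ≤ (n:ℝ) ^ (-(1+σ)) := by
    intro n; simp only [hg]; split_ifs
    · exact le_rfl
    · positivity
  have hg0 : ∀ n, 0 ≤ g n := by
    intro n; simp only [hg]; split_ifs <;> positivity
  have hgs : Summable g := by
    refine Summable.of_nonneg_of_le hg0 hgle (Real.summable_nat_rpow.mpr (by linarith))
  have h1 : TT p (1 + σ) = ∑' n, g n := by
    have := tsum_subtype {n : ℕ | n.Prime} g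
    have e : ({n : ℕ | n.Prime} : Set ℕ).indicator g = g := by
      funext n
      simp only [Set.indicator, Set.mem_setOf_eq, hg]
      split_ifs <;> simp_all
    rw [e] at this
    rw [← this]
    apply tsum_congr
    intro q
    have hq : (q:ℕ).Prime := q.2
    simp only [hg]
    simp only [cast_eq_one_iff hq.one_le, hq, true_and]
  rw [h1, ← hgs.sum_add_tsum_nat_add (z+1)]
  apply add_le_add
  · unfold EE
    rw [Finset.sum_filter]
    apply Finset.sum_le_sum
    intro q _
    simp only [hg]
    split_ifs with h
    · have : (1:ℝ) ≤ q := by exact_mod_cast h.1.one_le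
      rw [one_div, ← Real.rpow_neg_one]
      exact Real.rpow_le_rpow_of_exponent_le this (by linarith)
    · exact le_rfl
  · refine le_trans ?_ (tail_le hσ z hz)
    exact ((summable_nat_add_iff (z+1)).2 hgs).tsum_le_tsum (fun i => hgle _) (tail_summable hσ (z+1))

/-- effective Dirichlet -/
lemma EE_lower {p z : ℕ} [hp : Fact p.Prime] (hz : (p:ℝ)^(9*p) ≤ √(Real.log z)) :
    Real.log (Real.log z) / 2 - 20 * p * Real.log p ≤ p * (EE p z + 1) := by
  have hp2 : (2:ℝ) ≤ p := by exact_mod_cast hp.out.two_le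
  set w := √(Real.log z) with hw
  have hw1 : 1 ≤ w := (one_le_pow₀ (by linarith)).trans hz
  have hw0 : 0 < w := by linarith
  have hlz : Real.log z = w ^ 2 := by
    rw [hw, Real.sq_sqrt]
    by_contra h; push Not at h
    rw [hw, Real.sqrt_eq_zero_of_nonpos h.le] at hw0; linarith
  have hz0 : 0 < z := by
    rcases Nat.eq_zero_or_pos z with h | h
    · subst h; simp at hlz; nlinarith
    · exact h
  have h1 := TT_lower (p := p) (σ := w⁻¹) (by positivity) (by gcongr)
  have h2 := TT_le (p := p) (z := z) (σ := w⁻¹) (by positivity) hz0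
  have h3 : (z:ℝ) ^ (-w⁻¹) / w⁻¹ ≤ 1 := by
    rw [Real.rpow_def_of_pos (by exact_mod_cast hz0), hlz]
    have : w ^ 2 * -w⁻¹ = -w := by field_simp
    rw [this, Real.exp_neg, div_inv_eq_mul, inv_mul_le_iff₀ (Real.exp_pos _), mul_one]
    linarith [Real.add_one_le_exp w]
  have h4 : Real.log (1 / w⁻¹) = Real.log (Real.log z) / 2 := by
    rw [hlz, Real.log_pow]; simp
  rw [h4] at h1
  refine h1.trans ?_
  have h5 := TT_nonneg p (1 + w⁻¹)
  nlinarith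

lemma EE_nonneg (p z : ℕ) : 0 ≤ EE p z := Finset.sum_nonneg (fun _ _ => by positivity)


lemma cyc_no {n p q : ℕ} (hn : IsCyclicNum n) (hp : p.Prime) (hq : q.Prime) (hpn : p ∣ n) (hqn : q ∣ n) : ¬ p ∣ q - 1 := by
  intro h
  have h1 : p ∣ Nat.totient n := by
    rw [← Nat.totient_prime hq] at h
    exact h.trans (Nat.totient_dvd_of_dvd hqn)
  have := Nat.dvd_gcd hpn h1
  rw [hn.2] at this
  exact hp.one_lt.ne' (Nat.dvd_one.1 this)

lemma not_cyc {n : ℕ} (hn : 0 < n) (h : ¬ IsCyclicNum n) :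
    ∃ p, p.Prime ∧ (p * p ∣ n ∨ ∃ q, q.Prime ∧ p ∣ q - 1 ∧ p * q ∣ n) := by
  have hg : Nat.gcd n (Nat.totient n) ≠ 1 := fun h1 => h ⟨hn, h1⟩
  obtain ⟨p, hp, hpd⟩ := Nat.exists_prime_and_dvd hg
  refine ⟨p, hp, ?_⟩
  have h1 := hpd.trans (Nat.gcd_dvd_left _ _)
  have h2 := hpd.trans (Nat.gcd_dvd_right _ _)
  rw [Nat.totient_eq_prod_factorization hn.ne', Finsupp.prod, (Nat.prime_iff.1 hp).dvd_finset_prod_iff] at h2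
  obtain ⟨q, hq, hpq⟩ := h2
  have hqp : q.Prime := by
    rw [Nat.support_factorization] at hq; exact Nat.prime_of_mem_primeFactors hq
  have hqn : q ∣ n := by
    rw [Nat.support_factorization] at hq; exact Nat.dvd_of_mem_primeFactors hq
  rcases hp.dvd_mul.1 hpq with h3 | h3
  · left
    have hk : n.factorization q - 1 ≠ 0 := by
      intro h0; rw [h0, pow_zero] at h3; exact hp.one_lt.ne' (Nat.dvd_one.1 h3)
    have h4 := (Nat.prime_dvd_prime_iff_eq hp hqp).1 (hp.dvd_of_dvd_pow h3)
    subst h4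
    rw [← sq]
    exact (pow_dvd_pow p (by omega)).trans (Nat.ordProj_dvd n p)
  · right
    refine ⟨q, hqp, h3, ?_⟩
    apply Nat.Coprime.mul_dvd_of_dvd_of_dvd _ h1 hqn
    rw [Nat.coprime_primes hp hqp]
    intro h4; subst h4
    have := Nat.le_of_dvd (by have := hp.two_le; omega) h3
    have := hp.two_le
    omega

lemma card_mult (X d : ℕ) : (((Finset.Ioc 0 X).filter (fun m => d ∣ m)).card : ℝ) ≤ X / d := by
  rw [Nat.Ioc_filter_dvd_card_eq_div]; exact Nat.cast_div_le

lemma card_mult_ge (X d : ℕ) : (X / d : ℝ) - 1 ≤ (((Finset.Ioc 0 X).filter (fun m => d ∣ m)).card : ℝ) := by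
  rw [Nat.Ioc_filter_dvd_card_eq_div, ← Nat.floor_div_eq_div (K := ℝ)]
  exact (Nat.sub_one_lt_floor _).le

/-- Turan-Kubilius type bound -/
lemma TK (Q : Finset ℕ) (hQ : ∀ q ∈ Q, q.Prime) (X : ℕ) :
    (((Finset.Ioc 0 X).filter (fun m => ∀ q ∈ Q, ¬ q ∣ m)).card : ℝ) * ∑ q ∈ Q, (1:ℝ)/q ≤ X + 2 * Q.card := by
  set E := ∑ q ∈ Q, (1:ℝ)/q with hE
  have hE0 : 0 ≤ E := Finset.sum_nonneg (fun _ _ => by positivity)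
  rcases hE0.eq_or_lt with h0 | hpos
  · rw [← h0]; simp; positivity
  set ω : ℕ → ℝ := fun m => ∑ q ∈ Q, if q ∣ m then (1:ℝ) else 0 with hω
  have h1 : (((Finset.Ioc 0 X).filter (fun m => ∀ q ∈ Q, ¬ q ∣ m)).card : ℝ) * E ^ 2 ≤ ∑ m ∈ Finset.Ioc 0 X, (ω m - E) ^ 2 := by
    rw [← nsmul_eq_mul, ← Finset.sum_const]
    calc _ = ∑ m ∈ (Finset.Ioc 0 X).filter (fun m => ∀ q ∈ Q, ¬ q ∣ m), (ω m - E) ^ 2 := by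
          apply Finset.sum_congr rfl
          intro m hm
          have : ω m = 0 := Finset.sum_eq_zero (fun q hq => by
            rw [if_neg ((Finset.mem_filter.1 hm).2 q hq)])
          rw [this]; ring
      _ ≤ _ := Finset.sum_le_sum_of_subset_of_nonneg (Finset.filter_subset _ _) (fun _ _ _ => sq_nonneg _)
  have hcnt : ∀ d : ℕ, ∑ m ∈ Finset.Ioc 0 X, (if d ∣ m then (1:ℝ) else 0) = (((Finset.Ioc 0 X).filter (fun m => d ∣ m)).card : ℝ) := by
    intro d; rw [Finset.sum_boole]
  have h2 : X * E - Q.card ≤ ∑ m ∈ Finset.Ioc 0 X, ω m := by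
    simp only [hω]
    rw [Finset.sum_comm]
    simp_rw [hcnt]
    calc X * E - Q.card = ∑ q ∈ Q, ((X / q : ℝ) - 1) := by
          rw [Finset.sum_sub_distrib, hE, Finset.mul_sum]; simp [div_eq_mul_inv]
      _ ≤ _ := Finset.sum_le_sum (fun q _ => card_mult_ge X q)
  have h3 : ∑ m ∈ Finset.Ioc 0 X, ω m ^ 2 ≤ X * E ^ 2 + X * E := by
    have e : ∀ m, ω m ^ 2 = ∑ q ∈ Q, ∑ r ∈ Q, (if q ∣ m ∧ r ∣ m then (1:ℝ) else 0) := by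
      intro m
      simp only [hω, sq, Finset.sum_mul_sum]
      apply Finset.sum_congr rfl; intro q _; apply Finset.sum_congr rfl; intro r _
      split_ifs <;> simp_all
    simp_rw [e]
    rw [Finset.sum_comm]
    have : X * E ^ 2 + X * E = ∑ q ∈ Q, ∑ r ∈ Q, ((X:ℝ) / (q * r) + if q = r then (X:ℝ) / q else 0) := by
      simp_rw [Finset.sum_add_distrib]
      congr 1
      · rw [sq, hE, Finset.sum_mul_sum, Finset.mul_sum]
        apply Finset.sum_congr rfl; intro q _; rw [Finset.mul_sum]; apply Finset.sum_congr rfl; intro r _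
        field_simp
      · simp only [Finset.sum_ite_eq]
        rw [hE, Finset.mul_sum]
        apply Finset.sum_congr rfl; intro q hq; rw [if_pos hq]; ring
    rw [this]
    apply Finset.sum_le_sum; intro q hq
    rw [Finset.sum_comm]
    apply Finset.sum_le_sum; intro r hr
    by_cases hqr : q = r
    · subst hqr
      simp only [and_self, if_true]
      rw [hcnt]
      have := card_mult X q
      have h4 : (0:ℝ) ≤ X / (q * q) := by positivity
      linarith
    · rw [if_neg hqr, add_zero]
      have hco := (Nat.coprime_primes (hQ q hq) (hQ r hr)).2 hqr
      have e2 : ∀ m, (q ∣ m ∧ r ∣ m) ↔ q * r ∣ m := fun m =>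
        ⟨fun h => hco.mul_dvd_of_dvd_of_dvd h.1 h.2, fun h => ⟨(dvd_mul_right _ _).trans h, (dvd_mul_left _ _).trans h⟩⟩
      simp_rw [e2]
      rw [hcnt]
      have := card_mult X (q * r)
      push_cast at this; exact this
  have h4 : ∑ m ∈ Finset.Ioc 0 X, (ω m - E) ^ 2 = ∑ m ∈ Finset.Ioc 0 X, ω m ^ 2 - 2 * E * ∑ m ∈ Finset.Ioc 0 X, ω m + X * E ^ 2 := by
    rw [Finset.mul_sum, ← Finset.sum_sub_distrib]
    have : (X:ℝ) * E ^ 2 = ∑ m ∈ Finset.Ioc 0 X, E ^ 2 := by simp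
    rw [this, ← Finset.sum_add_distrib]
    apply Finset.sum_congr rfl; intro m _; ring
  have h5 : 2 * E * (X * E - Q.card) ≤ 2 * E * ∑ m ∈ Finset.Ioc 0 X, ω m := by
    apply mul_le_mul_of_nonneg_left h2 (by linarith)
  apply le_of_mul_le_mul_right _ hpos
  nlinarith

lemma cyc_div_bound {p z x : ℕ} (hp : p.Prime) (hz : z ≤ x / p) :
    (((Finset.Ioc 0 x).filter (fun n => IsCyclicNum n ∧ p ∣ n)).card : ℝ) * EE p z ≤ 3 * x / p := by
  set Q := (Finset.range (z+1)).filter (fun q => q.Prime ∧ p ∣ q - 1) with hQ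
  have h1 := TK Q (fun q hq => (Finset.mem_filter.1 hq).2.1) (x / p)
  have h2 : ((Finset.Ioc 0 x).filter (fun n => IsCyclicNum n ∧ p ∣ n)).card ≤ ((Finset.Ioc 0 (x/p)).filter (fun m => ∀ q ∈ Q, ¬ q ∣ m)).card := by
    apply Finset.card_le_card_of_injOn (fun n => n / p)
    · intro n hn
      simp only [Finset.coe_filter, Finset.mem_Ioc, Set.mem_ofPred_eq] at hn ⊢
      obtain ⟨⟨h3, h4⟩, h5, h6⟩ := hn
      refine ⟨⟨Nat.div_pos (Nat.le_of_dvd h3 h6) hp.pos, Nat.div_le_div_right h4⟩, ?_⟩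
      intro q hq hqd
      rw [hQ, Finset.mem_filter] at hq
      exact cyc_no h5 hp hq.2.1 h6 (hqd.trans (Nat.div_dvd_of_dvd h6)) hq.2.2
    · intro a ha b hb hab
      simp only [Finset.coe_filter, Set.mem_ofPred_eq] at ha hb
      exact (Nat.div_left_inj ha.2.2 hb.2.2).1 hab
  have h3 : Q.card ≤ x / p := by
    have : Q ⊆ Finset.Ioc 0 z := by
      intro q hq
      rw [hQ, Finset.mem_filter, Finset.mem_range] at hq
      rw [Finset.mem_Ioc]; exact ⟨hq.2.1.pos, by omega⟩
    have := Finset.card_le_card this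
    rw [Nat.card_Ioc] at this; omega
  have h4 : ((x / p : ℕ) : ℝ) ≤ x / p := Nat.cast_div_le
  have h3' : (Q.card : ℝ) ≤ ((x / p : ℕ) : ℝ) := by exact_mod_cast h3
  have h2' : (((Finset.Ioc 0 x).filter (fun n => IsCyclicNum n ∧ p ∣ n)).card : ℝ) ≤ (((Finset.Ioc 0 (x/p)).filter (fun m => ∀ q ∈ Q, ¬ q ∣ m)).card : ℝ) := by exact_mod_cast h2
  calc _ ≤ (((Finset.Ioc 0 (x/p)).filter (fun m => ∀ q ∈ Q, ¬ q ∣ m)).card : ℝ) * EE p z := 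
        mul_le_mul_of_nonneg_right h2' (EE_nonneg _ _)
    _ ≤ _ := h1
    _ ≤ 3 * (x / p) := by linarith
    _ = _ := by ring


lemma bt_dvd {p N M : ℕ} (hM : M ∣ N.factorial) (hpM : Nat.Coprime p M) :
    M ∣ ∏ i ∈ Finset.range N, (p * (i+1) + 1) := by
  have hM0 : M ≠ 0 := fun h => by
    rw [h] at hM; exact (Nat.factorial_pos N).ne' (Nat.eq_zero_of_zero_dvd hM)
  haveI : NeZero M := ⟨hM0⟩
  rw [← ZMod.natCast_eq_zero_iff]
  set u := ((p : ZMod M)⁻¹).val with hu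
  have hpu : (p : ZMod M) * (u : ZMod M) = 1 := by
    rw [hu, ZMod.natCast_zmod_val]; exact ZMod.coe_mul_inv_eq_one p hpM
  have h1 : ((∏ i ∈ Finset.range N, (p * (i+1) + 1) : ℕ) : ZMod M) = (p : ZMod M)^N * (((u+1).ascFactorial N : ℕ) : ZMod M) := by
    rw [Nat.ascFactorial_eq_prod_range]
    push_cast
    have : (p : ZMod M)^N = ∏ i ∈ Finset.range N, (p : ZMod M) := by simp
    rw [this, ← Finset.prod_mul_distrib]
    apply Finset.prod_congr rfl
    intro i _
    rw [← hpu]; ring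
  rw [h1, (ZMod.natCast_eq_zero_iff _ _).2 (hM.trans (Nat.factorial_dvd_ascFactorial _ _)), mul_zero]

lemma bt_prod {p N : ℕ} (hp : p.Prime) (S : Finset ℕ) (hS : ∀ q ∈ S, q.Prime ∧ p ∣ q - 1 ∧ N < q ∧ q ≤ p * N + 1) :
    ∏ q ∈ S, q ≤ (p * (p+1)) ^ N := by
  set A := ∏ i ∈ Finset.range N, (p * (i+1) + 1) with hA
  set M := N.factorial / p ^ N.factorial.factorization p with hM
  have hfac : p ^ N.factorial.factorization p * M = N.factorial := Nat.ordProj_mul_ordCompl_eq_self _ _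
  have hcop : Nat.Coprime p M := Nat.coprime_ordCompl hp (Nat.factorial_ne_zero N)
  have hMd : M ∣ N.factorial := ⟨_, (by rw [mul_comm]; exact hfac.symm)⟩
  have h1 : M ∣ A := bt_dvd hMd hcop
  have h2 : ∏ q ∈ S, q ∣ A := by
    apply Finset.prod_primes_dvd
    · intro q hq; exact (hS q hq).1.prime
    · intro q hq
      obtain ⟨h3, ⟨m, hm⟩, h5, h6⟩ := hS q hq
      have hq1 := h3.two_le
      have hm0 : m ≠ 0 := by rintro rfl; omega
      have hmN : m ≤ N := by
        have : p * m ≤ p * N := by omega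
        exact Nat.le_of_mul_le_mul_left this hp.pos
      have : q = p * ((m-1)+1) + 1 := by
        rw [Nat.sub_add_cancel (by omega)]; omega
      rw [this]
      exact Finset.dvd_prod_of_mem (fun i => p * (i+1) + 1) (Finset.mem_range.2 (by omega))
  have hco : Nat.Coprime (∏ q ∈ S, q) M := by
    apply Nat.Coprime.prod_left
    intro q hq
    rw [(hS q hq).1.coprime_iff_not_dvd]
    intro hd
    have := ((hS q hq).1.dvd_factorial).1 (hd.trans hMd)
    have := (hS q hq).2.2.1
    omega
  have h3 := hco.mul_dvd_of_dvd_of_dvd h2 h1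
  have hApos : 0 < A := Finset.prod_pos (fun _ _ => by positivity)
  have h4 := Nat.le_of_dvd hApos h3
  have h5 : A ≤ (p+1)^N * N.factorial := by
    rw [← Finset.prod_range_add_one_eq_factorial]
    have : (p+1)^N = ∏ i ∈ Finset.range N, (p+1) := by simp
    rw [this, ← Finset.prod_mul_distrib]
    apply Finset.prod_le_prod' 
    intro i _
    nlinarith
  have h6 : p ^ N.factorial.factorization p ≤ p ^ N := by
    apply Nat.pow_le_pow_right hp.pos
    have := Fact.mk hp
    rw [Nat.factorization_def _ hp]
    have := sub_one_mul_padicValNat_factorial (p := p) N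
    have h7 : 1 ≤ p - 1 := by have := hp.two_le; omega
    have h8 : 1 * padicValNat p N.factorial ≤ (p-1) * padicValNat p N.factorial := Nat.mul_le_mul_right _ h7
    omega
  have hM0 : 0 < M := Nat.pos_of_dvd_of_pos hMd (Nat.factorial_pos N)
  apply Nat.le_of_mul_le_mul_right _ hM0
  calc _ ≤ A := h4
    _ ≤ (p+1)^N * N.factorial := h5
    _ = (p+1)^N * (p ^ N.factorial.factorization p * M) := by rw [hfac]
    _ ≤ (p+1)^N * (p ^ N * M) := by gcongr
    _ = _ := by rw [mul_pow]; ring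

lemma bt_dyadic {p j : ℕ} (hp : p.Prime) (hj : 1 ≤ j) (S : Finset ℕ)
    (hS : ∀ q ∈ S, q.Prime ∧ p ∣ q - 1 ∧ 2^(j-1) * p < q ∧ q ≤ p * 2^j + 1) :
    ∑ q ∈ S, (1:ℝ)/q ≤ 9 * Real.log p / p * (1 / j) := by
  have hp2 : (2:ℝ) ≤ p := by exact_mod_cast hp.two_le
  have hpow : (2:ℕ)^j = 2^(j-1) * 2 := by
    rw [← pow_succ, Nat.sub_add_cancel hj]
  have hlt : ∀ q ∈ S, 2^j < q := by
    intro q hq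
    have := (hS q hq).2.2.1
    have h2 := Nat.mul_le_mul_left (2^(j-1)) hp.two_le
    omega
  have h1 := bt_prod hp S (N := 2^j) (fun q hq => ⟨(hS q hq).1, (hS q hq).2.1, hlt q hq, (hS q hq).2.2.2⟩)
  have h2 : (2^j)^S.card ≤ ∏ q ∈ S, q := Finset.pow_card_le_prod _ _ _ (fun q hq => (hlt q hq).le)
  have h3 : ((2:ℝ)^j)^S.card ≤ ((p:ℝ)^3)^(2^j) := by
    have h4 : (2^j)^S.card ≤ (p^3)^(2^j) := (h2.trans h1).trans (by
      apply Nat.pow_le_pow_left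
      have := hp.two_le
      nlinarith [mul_le_mul this this (by norm_num) (by omega)])
    exact_mod_cast h4
  have h4 := Real.log_le_log (by positivity) h3
  rw [Real.log_pow, Real.log_pow, Real.log_pow, Real.log_pow] at h4
  push_cast at h4
  have hj0 : (0:ℝ) < j := by exact_mod_cast hj
  have hlp : 0 < Real.log p := Real.log_pos (by linarith)
  have hl2 := Real.log_two_gt_d9
  have h5 : ∑ q ∈ S, (1:ℝ)/q ≤ S.card * (1 / (2^(j-1) * p)) := by
    rw [← nsmul_eq_mul]
    apply Finset.sum_le_card_nsmul
    intro q hq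
    apply one_div_le_one_div_of_le (by positivity)
    exact_mod_cast (hS q hq).2.2.1.le
  refine h5.trans ?_
  have hpow' : (2:ℝ)^j = 2^(j-1) * 2 := by exact_mod_cast hpow
  rw [hpow'] at h4
  set T : ℝ := 2^(j-1) with hT
  have hT0 : 0 < T := by positivity
  have h6 : (S.card:ℝ) * j ≤ T * 9 * Real.log p := by
    have : (S.card:ℝ) * (j * (2/3)) ≤ S.card * (j * Real.log 2) := by gcongr; linarith
    linarith
  rw [mul_one_div, mul_one_div, div_div, div_le_div_iff₀ (by positivity) (by positivity)]
  nlinarith [mul_le_mul_of_nonneg_right h6 (by linarith : (0:ℝ) ≤ p)]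

lemma EE_upper {p x J : ℕ} (hp : p.Prime) (hp3 : 3 ≤ p) (hJ : x ≤ 2^J) :
    EE p x ≤ 9 * Real.log p / p * (1 + Real.log J) := by
  have hp2 : (2:ℝ) ≤ p := by exact_mod_cast hp.two_le
  have hlp : 0 < Real.log p := Real.log_pos (by linarith)
  set S : ℕ → Finset ℕ := fun j => (Finset.range (x+1)).filter (fun q => (q.Prime ∧ p ∣ q - 1) ∧ Nat.clog 2 ((q-1)/p) = j) with hS
  have hmaps : ∀ q ∈ (Finset.range (x+1)).filter (fun q => q.Prime ∧ p ∣ q - 1), Nat.clog 2 ((q-1)/p) ∈ Finset.Icc 1 J := by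
    intro q hq
    rw [Finset.mem_filter, Finset.mem_range] at hq
    obtain ⟨h1, h2, ⟨m, hm⟩⟩ := hq
    rw [hm, Nat.mul_div_cancel_left _ hp.pos, Finset.mem_Icc]
    have hq2 := h2.two_le
    have hm2 : 2 ≤ m := by
      rcases m with _ | _ | m
      · omega
      · exfalso
        have hqe : q = p + 1 := by omega
        have hodd := hp.odd_of_ne_two (by omega)
        have := h2.odd_of_ne_two (by omega)
        rw [hqe] at this
        exact (Nat.not_even_iff_odd.2 this) hodd.add_one
      · omega
    constructor
    · exact Nat.clog_pos (by norm_num) hm2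
    · apply (Nat.clog_le_iff_le_pow (by norm_num)).2
      have : m ≤ p * m := Nat.le_mul_of_pos_left _ hp.pos
      omega
  unfold EE
  rw [← Finset.sum_fiberwise_of_maps_to hmaps]
  have hb : ∀ j ∈ Finset.Icc 1 J, ∑ q ∈ ((Finset.range (x+1)).filter (fun q => q.Prime ∧ p ∣ q - 1)).filter (fun q => Nat.clog 2 ((q-1)/p) = j), (1:ℝ)/q ≤ 9 * Real.log p / p * (1 / j) := by
    intro j hj
    have hj1 := (Finset.mem_Icc.1 hj).1
    apply bt_dyadic hp hj1
    intro q hq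
    rw [Finset.mem_filter, Finset.mem_filter] at hq
    obtain ⟨⟨_, h2, ⟨m, hm⟩⟩, h3⟩ := hq
    rw [hm, Nat.mul_div_cancel_left _ hp.pos] at h3
    have hq2 := h2.two_le
    refine ⟨h2, ⟨m, hm⟩, ?_, ?_⟩
    · have : 2^(j-1) < m := by
        rw [← Nat.lt_clog_iff_pow_lt (by norm_num)]; omega
      have := Nat.mul_le_mul_left p this.le
      rw [mul_comm]; omega
    · have : m ≤ 2^j := (Nat.clog_le_iff_le_pow (by norm_num)).1 h3.le
      have := Nat.mul_le_mul_left p this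
      omega
  refine (Finset.sum_le_sum hb).trans ?_
  rw [← Finset.mul_sum]
  apply mul_le_mul_of_nonneg_left _ (by positivity)
  have := harmonic_le_one_add_log J
  rw [harmonic_eq_sum_Icc] at this
  push_cast at this
  simpa [one_div] using this


lemma log_tele (n : ℕ) (hn : 1 ≤ n) :
    Real.log ((n:ℝ)+1) / ((n:ℝ)+1)^2 ≤ (Real.log n + 2) / n - (Real.log ((n:ℝ)+1) + 2) / ((n:ℝ)+1) := by
  have hn0 : (1:ℝ) ≤ n := by exact_mod_cast hn
  have h1 : Real.log ((n:ℝ)+1) - 1/n ≤ Real.log n := by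
    have : Real.log (((n:ℝ)+1)/n) ≤ ((n:ℝ)+1)/n - 1 := Real.log_le_sub_one_of_pos (by positivity)
    rw [Real.log_div (by positivity) (by positivity)] at this
    have e : ((n:ℝ)+1)/n - 1 = 1/n := by field_simp; ring
    linarith
  have hl : 0 ≤ Real.log ((n:ℝ)+1) := Real.log_nonneg (by linarith)
  set l := Real.log ((n:ℝ)+1)
  have h2 : (l - 1/n + 2) / n ≤ (Real.log n + 2) / n := by gcongr
  have h3 : l / ((n:ℝ)+1)^2 ≤ (l - 1/n + 2) / n - (l + 2) / ((n:ℝ)+1) := by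
    have : (l - 1/n + 2) / n - (l + 2) / ((n:ℝ)+1) - l / ((n:ℝ)+1)^2 = ((n - 1) * (n+1) + l * n) / (n^2 * ((n:ℝ)+1)^2) := by
      field_simp; ring
    have h6 : 0 ≤ ((n - 1) * (n+1) + l * n) / (n^2 * ((n:ℝ)+1)^2) := by
      apply div_nonneg _ (by positivity)
      have := mul_nonneg (by linarith : (0:ℝ) ≤ n - 1) (by linarith : (0:ℝ) ≤ (n:ℝ)+1)
      positivity
    linarith
  linarith

lemma log_sum (Y x : ℕ) (hY : 1 ≤ Y) : ∑ n ∈ Finset.Ioc Y x, Real.log n / (n:ℝ)^2 ≤ (Real.log Y + 2) / Y := by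
  have key : ∀ k : ℕ, ∑ n ∈ Finset.Ioc Y (Y+k), Real.log n / (n:ℝ)^2 ≤ (Real.log Y + 2) / Y - (Real.log (Y+k:ℕ) + 2) / (Y+k:ℕ) := by
    intro k
    induction k with
    | zero => simp
    | succ k ih =>
      rw [← add_assoc, ← Finset.sum_Ioc_consecutive _ (Nat.le_add_right Y k) (Nat.le_succ _)]
      have := log_tele (Y+k) (by omega)
      simp only [Nat.Ioc_succ_singleton, Finset.sum_singleton]
      push_cast at *
      linarith
  rcases le_total x Y with h | h
  · rw [Finset.Ioc_eq_empty (by omega), Finset.sum_empty]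
    have : 0 ≤ Real.log Y := Real.log_natCast_nonneg _
    positivity
  · obtain ⟨k, rfl⟩ := Nat.exists_eq_add_of_le h
    refine (key k).trans ?_
    have : 0 ≤ Real.log (Y+k:ℕ) := Real.log_natCast_nonneg _
    have h2 : 0 ≤ (Real.log (Y+k:ℕ) + 2) / (Y+k:ℕ) := by positivity
    linarith

/-- primes up to Y -/
def PP (Y : ℕ) : Finset ℕ := (Finset.Ioc 0 Y).filter Nat.Prime

lemma rough_noncyc {Y x J : ℕ} (hY : 3 ≤ Y) (hJ : x ≤ 2^J) :
    (((Finset.Ioc 0 x).filter (fun n => ¬ IsCyclicNum n ∧ ∀ p ∈ PP Y, ¬ p ∣ n)).card : ℝ)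
      ≤ x * (1 + 9 * (1 + Real.log J)) * ((Real.log Y + 2) / Y) := by
  classical
  set D : ℕ → Finset ℕ := fun d => (Finset.Ioc 0 x).filter (fun m => d ∣ m) with hD
  set Pr := (Finset.Ioc Y x).filter Nat.Prime with hPr
  set Q : ℕ → Finset ℕ := fun p => (Finset.range (x+1)).filter (fun q => q.Prime ∧ p ∣ q - 1) with hQ
  have hsub : (Finset.Ioc 0 x).filter (fun n => ¬ IsCyclicNum n ∧ ∀ p ∈ PP Y, ¬ p ∣ n)
      ⊆ Pr.biUnion (fun p => D (p*p) ∪ (Q p).biUnion (fun q => D (p*q))) := by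
    intro n hn
    rw [Finset.mem_filter, Finset.mem_Ioc] at hn
    obtain ⟨⟨h0, hx⟩, hc, hr⟩ := hn
    obtain ⟨p, hp, h⟩ := not_cyc h0 hc
    have hpn : p ∣ n := by
      rcases h with h | ⟨q, _, _, h⟩ <;> exact (dvd_mul_right _ _).trans h
    have hpY : Y < p := by
      by_contra h2; exact hr p (Finset.mem_filter.2 ⟨Finset.mem_Ioc.2 ⟨hp.pos, by omega⟩, hp⟩) hpn
    have hpx : p ≤ x := (Nat.le_of_dvd h0 hpn).trans hx
    rw [Finset.mem_biUnion]
    refine ⟨p, ?_, ?_⟩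
    · rw [hPr, Finset.mem_filter, Finset.mem_Ioc]; exact ⟨⟨hpY, hpx⟩, hp⟩
    · rw [Finset.mem_union, Finset.mem_biUnion]
      rcases h with h | ⟨q, hq, hq1, h⟩
      · left; rw [hD, Finset.mem_filter, Finset.mem_Ioc]; exact ⟨⟨h0, hx⟩, h⟩
      · right
        refine ⟨q, ?_, ?_⟩
        · rw [hQ, Finset.mem_filter, Finset.mem_range]
          have := Nat.le_of_dvd h0 ((dvd_mul_left q p).trans h)
          exact ⟨by omega, hq, hq1⟩
        · rw [hD, Finset.mem_filter, Finset.mem_Ioc]; exact ⟨⟨h0, hx⟩, h⟩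
  have h1 : (((Finset.Ioc 0 x).filter (fun n => ¬ IsCyclicNum n ∧ ∀ p ∈ PP Y, ¬ p ∣ n)).card : ℝ)
      ≤ ∑ p ∈ Pr, (((D (p*p)).card : ℝ) + ∑ q ∈ Q p, ((D (p*q)).card : ℝ)) := by
    have h2 := (Finset.card_le_card hsub).trans Finset.card_biUnion_le
    have h3 : ∑ p ∈ Pr, (D (p*p) ∪ (Q p).biUnion (fun q => D (p*q))).card ≤ ∑ p ∈ Pr, ((D (p*p)).card + ∑ q ∈ Q p, (D (p*q)).card) := by
      apply Finset.sum_le_sum; intro p _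
      exact (Finset.card_union_le _ _).trans (by gcongr; exact Finset.card_biUnion_le)
    exact_mod_cast h2.trans h3
  have hJ0 : 0 ≤ Real.log J := Real.log_natCast_nonneg _
  have h2 : ∀ p ∈ Pr, (((D (p*p)).card : ℝ) + ∑ q ∈ Q p, ((D (p*q)).card : ℝ)) ≤ x * (1 + 9 * (1 + Real.log J)) * (Real.log p / (p:ℝ)^2) := by
    intro p hp
    rw [hPr, Finset.mem_filter, Finset.mem_Ioc] at hp
    have hp3 : (3:ℝ) ≤ p := by exact_mod_cast (by omega : 3 ≤ p)
    have hlp : 1 ≤ Real.log p := by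
      rw [Real.le_log_iff_exp_le (by linarith)]; linarith [Real.exp_one_lt_d9]
    have h3 : ((D (p*p)).card : ℝ) ≤ x * (Real.log p / (p:ℝ)^2) := by
      refine (card_mult x (p*p)).trans ?_
      push_cast
      rw [← sq, div_eq_mul_one_div]
      gcongr
    have h4 : ∑ q ∈ Q p, ((D (p*q)).card : ℝ) ≤ x * (9 * (1 + Real.log J)) * (Real.log p / (p:ℝ)^2) := by
      calc ∑ q ∈ Q p, ((D (p*q)).card : ℝ) ≤ ∑ q ∈ Q p, (x / p : ℝ) * (1 / q) := by
            apply Finset.sum_le_sum; intro q _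
            refine (card_mult x (p*q)).trans (le_of_eq ?_)
            push_cast; field_simp
        _ = (x / p : ℝ) * EE p x := by rw [← Finset.mul_sum]; rfl
        _ ≤ (x / p : ℝ) * (9 * Real.log p / p * (1 + Real.log J)) := by
            gcongr; exact EE_upper hp.2 (by omega) hJ
        _ = _ := by field_simp
    linarith
  refine h1.trans ((Finset.sum_le_sum h2).trans ?_)
  rw [← Finset.mul_sum]
  apply mul_le_mul_of_nonneg_left _ (by positivity)
  refine le_trans ?_ (log_sum Y x (by omega))
  apply Finset.sum_le_sum_of_subset_of_nonneg (Finset.filter_subset _ _)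
  intro n _ _
  have := Real.log_natCast_nonneg n
  positivity

/-- Legendre sieve -/
lemma legendre (P : Finset ℕ) (hP : ∀ p ∈ P, p.Prime) : ∀ X : ℕ,
    |(((Finset.Ioc 0 X).filter (fun n => ∀ p ∈ P, ¬ p ∣ n)).card : ℝ) - X * ∏ p ∈ P, (1 - 1/(p:ℝ))| ≤ 2^P.card - 1 := by
  classical
  induction P using Finset.induction_on with
  | empty => intro X; simp
  | insert p P hpP ih =>
    intro X
    have hp := hP p (Finset.mem_insert_self _ _)
    have hP' : ∀ q ∈ P, q.Prime := fun q hq => hP q (Finset.mem_insert_of_mem hq)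
    have ih1 := ih hP' X
    have ih2 := ih hP' (X / p)
    have hG0 : 0 ≤ ∏ p ∈ P, (1 - 1/(p:ℝ)) := by
      apply Finset.prod_nonneg; intro q hq
      have : (1:ℝ) ≤ q := by exact_mod_cast (hP' q hq).one_le
      rw [sub_nonneg, div_le_one (by linarith)]; exact this
    have hG1 : ∏ p ∈ P, (1 - 1/(p:ℝ)) ≤ 1 := by
      apply Finset.prod_le_one
      · intro q hq
        have : (1:ℝ) ≤ q := by exact_mod_cast (hP' q hq).one_le
        rw [sub_nonneg, div_le_one (by linarith)]; exact this
      · intro q _; have : (0:ℝ) ≤ 1/q := by positivity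
        linarith
    rw [Finset.prod_insert hpP, Finset.card_insert_of_notMem hpP]
    set G := ∏ p ∈ P, (1 - 1/(p:ℝ)) with hG
    have hcard : ((Finset.Ioc 0 X).filter (fun n => ∀ q ∈ insert p P, ¬ q ∣ n)).card + ((Finset.Ioc 0 (X/p)).filter (fun n => ∀ q ∈ P, ¬ q ∣ n)).card
        = ((Finset.Ioc 0 X).filter (fun n => ∀ q ∈ P, ¬ q ∣ n)).card := by
      have h1 := Finset.card_filter_add_card_filter_not (s := (Finset.Ioc 0 X).filter (fun n => ∀ q ∈ P, ¬ q ∣ n)) (fun n => ¬ p ∣ n)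
      rw [← h1]
      congr 1
      · congr 1
        ext n
        simp only [Finset.mem_filter, Finset.forall_mem_insert]; tauto
      · apply Finset.card_bij (fun m _ => p * m)
        · intro m hm
          simp only [Finset.mem_filter, Finset.mem_Ioc, not_not] at hm ⊢
          refine ⟨⟨⟨Nat.mul_pos hp.pos hm.1.1, ?_⟩, ?_⟩, dvd_mul_right _ _⟩
          · have := Nat.mul_le_mul_left p hm.1.2
            exact this.trans (Nat.mul_div_le X p)
          · intro q hq hd
            rcases (hP' q hq).dvd_mul.1 hd with h | h
            · have := (Nat.prime_dvd_prime_iff_eq (hP' q hq) hp).1 h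
              subst this; exact hpP hq
            · exact hm.2 q hq h
        · intro a _ b _ hab; exact Nat.eq_of_mul_eq_mul_left hp.pos hab
        · intro n hn
          simp only [Finset.mem_filter, Finset.mem_Ioc, not_not] at hn
          obtain ⟨m, rfl⟩ := hn.2
          refine ⟨m, ?_, rfl⟩
          simp only [Finset.mem_filter, Finset.mem_Ioc]
          refine ⟨⟨Nat.pos_of_mul_pos_left hn.1.1.1, ?_⟩, fun q hq hd => hn.1.2 q hq (hd.mul_left p)⟩
          rw [Nat.le_div_iff_mul_le hp.pos, mul_comm]; exact hn.1.1.2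
    have hcard' : (((Finset.Ioc 0 X).filter (fun n => ∀ q ∈ insert p P, ¬ q ∣ n)).card : ℝ) = (((Finset.Ioc 0 X).filter (fun n => ∀ q ∈ P, ¬ q ∣ n)).card : ℝ) - (((Finset.Ioc 0 (X/p)).filter (fun n => ∀ q ∈ P, ¬ q ∣ n)).card : ℝ) := by
      rw [← hcard]; push_cast; ring
    rw [hcard', pow_succ]
    have hf1 : ((X / p : ℕ) : ℝ) ≤ X / p := Nat.cast_div_le
    have hf2 : (X / p : ℝ) - 1 ≤ ((X / p : ℕ) : ℝ) := by
      rw [← Nat.floor_div_eq_div (K := ℝ)]; exact (Nat.sub_one_lt_floor _).le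
    have e : (X:ℝ) * ((1 - 1/p) * G) = X * G - (X / p) * G := by ring
    rw [e]
    rw [abs_le] at ih1 ih2 ⊢
    constructor <;> nlinarith

lemma primes_dyadic (j : ℕ) (hj : 1 ≤ j) :
    ∑ p ∈ (Finset.Ioc (2^j) (2^(j+1))).filter Nat.Prime, (1:ℝ)/p ≤ 4 / j := by
  have h := Chebyshev.theta_le_log4_mul_x (x := ((2^(j+1) : ℕ) : ℝ)) (by positivity)
  rw [Chebyshev.theta, Nat.floor_natCast] at h
  have hj0 : (0:ℝ) < j := by exact_mod_cast hj
  have hl2 : 0 < Real.log 2 := Real.log_pos (by norm_num)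
  have h1 : ∑ p ∈ (Finset.Ioc (2^j) (2^(j+1))).filter Nat.Prime, (1:ℝ)/p * (2^j * (j * Real.log 2)) ≤ Real.log 4 * ((2^(j+1) : ℕ) : ℝ) := by
    refine le_trans ?_ h
    refine le_trans (b := ∑ p ∈ (Finset.Ioc (2^j) (2^(j+1))).filter Nat.Prime, Real.log p) ?_ ?_
    · apply Finset.sum_le_sum
      intro p hp
      rw [Finset.mem_filter, Finset.mem_Ioc] at hp
      have hp2 : (2:ℝ)^j ≤ p := by exact_mod_cast hp.1.1.le
      have hp0 : (0:ℝ) < p := by exact_mod_cast hp.2.pos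
      have h3 : (j:ℝ) * Real.log 2 ≤ Real.log p := by
        rw [← Real.log_pow]; exact Real.log_le_log (by positivity) hp2
      calc (1:ℝ)/p * (2^j * (j * Real.log 2)) = (2^j / p) * (j * Real.log 2) := by ring
        _ ≤ 1 * (j * Real.log 2) := by
          gcongr; rw [div_le_one hp0]; exact hp2
        _ ≤ _ := by rw [one_mul]; exact h3
    · apply Finset.sum_le_sum_of_subset_of_nonneg
      · apply Finset.filter_subset_filter
        apply Finset.Ioc_subset_Ioc_left; positivity
      · intro p _ _; exact Real.log_natCast_nonneg _
  rw [← Finset.sum_mul, show (4:ℝ) = 2^2 by norm_num, Real.log_pow] at h1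
  rw [le_div_iff₀ hj0]
  push_cast at h1
  have hpw : (2:ℝ)^(j+1) = 2^j * 2 := pow_succ _ _
  rw [hpw] at h1
  apply le_of_mul_le_mul_right _ (by positivity : (0:ℝ) < 2^j * Real.log 2)
  linarith

lemma primes_range (a b : ℕ) (ha : 1 ≤ a) (hab : a ≤ b) :
    ∑ p ∈ (Finset.Ioc (2^a) (2^b)).filter Nat.Prime, (1:ℝ)/p ≤ ∑ j ∈ Finset.Ico a b, (4:ℝ) / j := by
  induction b, hab using Nat.le_induction with
  | base => simp
  | succ b hab ih =>
    rw [Finset.sum_Ico_succ_top hab]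
    have h : (Finset.Ioc (2^a) (2^(b+1))).filter Nat.Prime = (Finset.Ioc (2^a) (2^b)).filter Nat.Prime ∪ (Finset.Ioc (2^b) (2^(b+1))).filter Nat.Prime := by
      rw [← Finset.filter_union, Finset.Ioc_union_Ioc_eq_Ioc (Nat.pow_le_pow_right (by norm_num) hab) (Nat.pow_le_pow_right (by norm_num) (by omega))]
    rw [h]
    have h2 := Finset.sum_union_inter (s₁ := (Finset.Ioc (2^a) (2^b)).filter Nat.Prime) (s₂ := (Finset.Ioc (2^b) (2^(b+1))).filter Nat.Prime) (f := fun p : ℕ => (1:ℝ)/p)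
    have : 0 ≤ ∑ i ∈ (Finset.Ioc (2^a) (2^b)).filter Nat.Prime ∩ (Finset.Ioc (2^b) (2^(b+1))).filter Nat.Prime, (1:ℝ)/i := Finset.sum_nonneg (fun _ _ => by positivity)
    have h3 := primes_dyadic b (by omega)
    linarith


/-- Mertens-type product -/
noncomputable def GG (Y : ℕ) : ℝ := ∏ p ∈ PP Y, (1 - 1/(p:ℝ))

lemma PP_prime {Y p : ℕ} (h : p ∈ PP Y) : p.Prime := (Finset.mem_filter.1 h).2

lemma PP_le {Y p : ℕ} (h : p ∈ PP Y) : p ≤ Y := (Finset.mem_Ioc.1 (Finset.mem_filter.1 h).1).2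

lemma PP_card (Y : ℕ) : (PP Y).card ≤ Y := by
  have := Finset.card_filter_le (Finset.Ioc 0 Y) Nat.Prime
  simpa [PP] using this

lemma prime_half {p : ℕ} (hp : p.Prime) : 0 ≤ 1/(p:ℝ) ∧ 1/(p:ℝ) ≤ 1/2 := by
  have : (2:ℝ) ≤ p := by exact_mod_cast hp.two_le
  exact ⟨by positivity, by gcongr⟩

lemma one_sub_sum (S : Finset ℕ) (f : ℕ → ℝ) (hf : ∀ i ∈ S, 0 ≤ f i ∧ f i ≤ 1) :
    1 - ∑ i ∈ S, f i ≤ ∏ i ∈ S, (1 - f i) ∧ ∏ i ∈ S, (1 - f i) ≤ 1 := by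
  classical
  induction S using Finset.induction_on with
  | empty => simp
  | insert i S hi ih =>
    rw [Finset.sum_insert hi, Finset.prod_insert hi]
    have h1 := ih (fun j hj => hf j (Finset.mem_insert_of_mem hj))
    have h2 := hf i (Finset.mem_insert_self _ _)
    have h3 : 0 ≤ ∏ i ∈ S, (1 - f i) := Finset.prod_nonneg (fun j hj => by
      have := hf j (Finset.mem_insert_of_mem hj); linarith)
    constructor <;> nlinarith

lemma GG_pos (Y : ℕ) : 0 < GG Y := Finset.prod_pos (fun p hp => by
  have := prime_half (PP_prime hp); linarith)

lemma GG_le_one (Y : ℕ) : GG Y ≤ 1 := (one_sub_sum (PP Y) (fun p => 1/(p:ℝ)) (fun p hp => by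
  have := prime_half (PP_prime hp); constructor <;> linarith)).2

lemma PP_split (a b : ℕ) (hab : a ≤ b) : PP b = PP a ∪ (Finset.Ioc a b).filter Nat.Prime := by
  unfold PP
  rw [← Finset.filter_union, Finset.Ioc_union_Ioc_eq_Ioc (Nat.zero_le _) hab]

lemma PP_disj (a b : ℕ) : Disjoint (PP a) ((Finset.Ioc a b).filter Nat.Prime) := by
  rw [Finset.disjoint_left]
  intro p hp h
  have := PP_le hp
  rw [Finset.mem_filter, Finset.mem_Ioc] at h
  omega

lemma GG_compare (a b : ℕ) (ha : 1 ≤ a) (hab : a ≤ b) :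
    GG (2^a) * (1 - 4 * ((b:ℝ) - a) / a) ≤ GG (2^b) := by
  have ha0 : (0:ℝ) < a := by exact_mod_cast ha
  have hp : 2^a ≤ 2^b := Nat.pow_le_pow_right (by norm_num) hab
  have e : GG (2^b) = GG (2^a) * ∏ p ∈ (Finset.Ioc (2^a) (2^b)).filter Nat.Prime, (1 - 1/(p:ℝ)) := by
    unfold GG
    rw [PP_split _ _ hp, Finset.prod_union (PP_disj _ _)]
  rw [e]
  apply mul_le_mul_of_nonneg_left _ (GG_pos _).le
  refine le_trans ?_ (one_sub_sum _ (fun p => 1/(p:ℝ)) (fun p hp => by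
    have := prime_half (Finset.mem_filter.1 hp).2; constructor <;> linarith)).1
  have h1 := primes_range a b ha hab
  have h2 : ∑ j ∈ Finset.Ico a b, (4:ℝ) / j ≤ 4 * ((b:ℝ) - a) / a := by
    calc ∑ j ∈ Finset.Ico a b, (4:ℝ) / j ≤ ∑ j ∈ Finset.Ico a b, (4:ℝ) / a := by
          apply Finset.sum_le_sum; intro j hj
          have : (a:ℝ) ≤ j := by exact_mod_cast (Finset.mem_Ico.1 hj).1
          gcongr
      _ = _ := by
        rw [Finset.sum_const, Nat.card_Ico, nsmul_eq_mul, Nat.cast_sub hab]; ring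
  linarith

lemma GG_lower (b : ℕ) (hb : 1 ≤ b) : Real.exp (-9) / (b:ℝ)^8 ≤ GG (2^b) := by
  have hb0 : (0:ℝ) < b := by exact_mod_cast hb
  have h1 : ∀ p ∈ PP (2^b), Real.exp (-(2 * (1/(p:ℝ)))) ≤ 1 - 1/(p:ℝ) := by
    intro p hp
    obtain ⟨h0, h2⟩ := prime_half (PP_prime hp)
    set t := 1/(p:ℝ)
    rw [Real.exp_neg, inv_le_iff_one_le_mul₀' (Real.exp_pos _)]
    have := Real.add_one_le_exp (2*t)
    nlinarith
  have h2 : Real.exp (-(2 * ∑ p ∈ PP (2^b), 1/(p:ℝ))) ≤ GG (2^b) := by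
    rw [Finset.mul_sum, ← Finset.sum_neg_distrib, Real.exp_sum]
    exact Finset.prod_le_prod (fun _ _ => (Real.exp_pos _).le) h1
  refine le_trans ?_ h2
  have h3 : ∑ p ∈ PP (2^b), 1/(p:ℝ) ≤ 1/2 + 4 * (1 + Real.log b) := by
    rw [PP_split (2^1) (2^b) (Nat.pow_le_pow_right (by norm_num) hb), Finset.sum_union (PP_disj _ _)]
    have h4 := primes_range 1 b le_rfl hb
    have h5 : ∑ p ∈ PP (2^1), 1/(p:ℝ) = 1/2 := by
      have : PP (2^1) = {2} := by decide
      rw [this]; simp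
    have h6 : ∑ j ∈ Finset.Ico 1 b, (4:ℝ) / j ≤ 4 * (1 + Real.log b) := by
      have h7 := harmonic_le_one_add_log b
      rw [harmonic_eq_sum_Icc] at h7
      push_cast at h7
      calc ∑ j ∈ Finset.Ico 1 b, (4:ℝ) / j = 4 * ∑ j ∈ Finset.Ico 1 b, (j:ℝ)⁻¹ := by
            rw [Finset.mul_sum]; rfl
        _ ≤ 4 * ∑ j ∈ Finset.Icc 1 b, (j:ℝ)⁻¹ := by
            gcongr
            intro j hj; rw [Finset.mem_Ico] at hj; rw [Finset.mem_Icc]; omega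
        _ ≤ _ := by gcongr
    linarith
  have h4 : Real.exp (-9) / (b:ℝ)^8 = Real.exp (-9 - 8 * Real.log b) := by
    rw [Real.exp_sub]
    congr 1
    rw [show (8:ℝ) * Real.log b = (8:ℕ) * Real.log b by norm_num, Real.exp_nat_mul, Real.exp_log hb0]
  rw [h4]
  apply Real.exp_le_exp.2
  linarith

/-- number of cyclic numbers up to X -/
def CC (X : ℕ) : ℕ := ((Finset.Ioc 0 X).filter IsCyclicNum).card

lemma core_lower_aux {X N : ℕ} (Y : ℕ) (hX : X ≤ N) : (((Finset.Ioc 0 X).filter (fun n => ∀ p ∈ PP Y, ¬ p ∣ n)).card : ℝ) ≤ CC X + (((Finset.Ioc 0 N).filter (fun n => ¬ IsCyclicNum n ∧ ∀ p ∈ PP Y, ¬ p ∣ n)).card : ℝ) := by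
  have h3 : ((Finset.Ioc 0 X).filter (fun n => ∀ p ∈ PP Y, ¬ p ∣ n)).card ≤ CC X + ((Finset.Ioc 0 N).filter (fun n => ¬ IsCyclicNum n ∧ ∀ p ∈ PP Y, ¬ p ∣ n)).card := by
    refine (Finset.card_le_card (t := ((Finset.Ioc 0 X).filter IsCyclicNum) ∪ ((Finset.Ioc 0 N).filter (fun n => ¬ IsCyclicNum n ∧ ∀ p ∈ PP Y, ¬ p ∣ n))) ?_).trans (Finset.card_union_le _ _)
    intro n hn
    simp only [Finset.mem_union, Finset.mem_filter, Finset.mem_Ioc] at hn ⊢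
    by_cases hc : IsCyclicNum n
    · left; exact ⟨hn.1, hc⟩
    · right; exact ⟨⟨hn.1.1, by omega⟩, hc, hn.2⟩
  exact_mod_cast h3

lemma core_upper_aux {X N : ℕ} (Y : ℕ) (hX : X ≤ N) : (CC X : ℝ) ≤ (((Finset.Ioc 0 X).filter (fun n => ∀ p ∈ PP Y, ¬ p ∣ n)).card : ℝ) + ∑ p ∈ PP Y, (((Finset.Ioc 0 N).filter (fun n => IsCyclicNum n ∧ p ∣ n)).card : ℝ) := by
  have h3 : CC X ≤ ((Finset.Ioc 0 X).filter (fun n => ∀ p ∈ PP Y, ¬ p ∣ n)).card + ∑ p ∈ PP Y, ((Finset.Ioc 0 N).filter (fun n => IsCyclicNum n ∧ p ∣ n)).card := by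
    refine (Finset.card_le_card (t := ((Finset.Ioc 0 X).filter (fun n => ∀ p ∈ PP Y, ¬ p ∣ n)) ∪ (PP Y).biUnion (fun p => (Finset.Ioc 0 N).filter (fun n => IsCyclicNum n ∧ p ∣ n))) ?_).trans
      ((Finset.card_union_le _ _).trans (by gcongr; exact Finset.card_biUnion_le))
    intro n hn
    simp only [Finset.mem_union, Finset.mem_filter, Finset.mem_Ioc, Finset.mem_biUnion] at hn ⊢
    by_cases hc : ∀ p ∈ PP Y, ¬ p ∣ n
    · left; exact ⟨hn.1, hc⟩
    · right; push Not at hc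
      obtain ⟨p, hp, hd⟩ := hc
      exact ⟨p, hp, ⟨hn.1.1, by omega⟩, hn.2, hd⟩
  exact_mod_cast h3

lemma core_lower {X N J b : ℕ} (hX : X ≤ N) (hJ : N ≤ 2^J) (hb : 2 ≤ b) :
    X * GG (2^b) - 2^(2^b) - N * (1 + 9 * (1 + Real.log J)) * ((Real.log (2^b) + 2) / 2^b) ≤ CC X := by
  have h1 := (abs_le.1 (legendre (PP (2^b)) (fun p hp => PP_prime hp) X)).1
  have hY : 3 ≤ 2^b := by
    calc 3 ≤ 2^2 := by norm_num
      _ ≤ _ := Nat.pow_le_pow_right (by norm_num) hb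
  have h2 := rough_noncyc (Y := 2^b) (x := N) hY hJ
  push_cast at h2
  have h3' := core_lower_aux (2^b) hX
  have h4 : (2:ℝ)^(PP (2^b)).card ≤ 2^(2^b) := pow_le_pow_right₀ (by norm_num) (PP_card _)
  unfold GG
  linarith

lemma core_upper {X N z a : ℕ} {T : ℝ} (hT : 0 < T) (hX : X ≤ N)
    (h : ∀ p ∈ PP (2^a), z ≤ N / p ∧ T ≤ p * EE p z) :
    (CC X : ℝ) ≤ X * GG (2^a) + 2^(2^a) + 2^a * (3 * N / T) := by
  have h1 := (abs_le.1 (legendre (PP (2^a)) (fun p hp => PP_prime hp) X)).2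
  have h3' := core_upper_aux (2^a) hX
  have h4 : (2:ℝ)^(PP (2^a)).card ≤ 2^(2^a) := pow_le_pow_right₀ (by norm_num) (PP_card _)
  have h5 : ∑ p ∈ PP (2^a), (((Finset.Ioc 0 N).filter (fun n => IsCyclicNum n ∧ p ∣ n)).card : ℝ) ≤ 2^a * (3 * N / T) := by
    calc _ ≤ ∑ p ∈ PP (2^a), (3 * N / T : ℝ) := by
          apply Finset.sum_le_sum
          intro p hp
          obtain ⟨h6, h7⟩ := h p hp
          have h8 := cyc_div_bound (PP_prime hp) h6
          have hp0 : (0:ℝ) < p := by exact_mod_cast (PP_prime hp).pos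
          rw [le_div_iff₀ hp0] at h8
          rw [le_div_iff₀ hT]
          refine le_trans ?_ h8
          rw [mul_assoc, mul_comm (EE p z)]
          gcongr
      _ = (PP (2^a)).card * (3 * N / T : ℝ) := by rw [Finset.sum_const, nsmul_eq_mul]
      _ ≤ _ := by
        gcongr
        exact_mod_cast PP_card _
  unfold GG
  linarith


lemma N_facts {N : ℕ} {y : ℝ} (hy : y = Real.log (Real.log N)) (hy20 : 20 ≤ y) :
    Real.log N = Real.exp y ∧ (N:ℝ) = Real.exp (Real.exp y) ∧ 22 ≤ N := by
  have hlog : 0 < Real.log N := by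
    have h0 : 0 ≤ Real.log N := Real.log_natCast_nonneg _
    rcases h0.eq_or_lt with h | h
    · rw [← h, Real.log_zero] at hy; linarith
    · exact h
  have h1 : Real.log N = Real.exp y := by rw [hy, Real.exp_log hlog]
  have hN0 : (0:ℝ) < N := by
    rcases Nat.eq_zero_or_pos N with h | h
    · subst h; simp at hlog
    · exact_mod_cast h
  have h2 : (N:ℝ) = Real.exp (Real.exp y) := by rw [← h1, Real.exp_log hN0]
  refine ⟨h1, h2, ?_⟩
  have h3 := Real.add_one_le_exp y
  have h4 := Real.add_one_le_exp (Real.exp y)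
  have : (22:ℝ) ≤ N := by rw [h2]; linarith
  exact_mod_cast this

lemma exists_J {N : ℕ} {y : ℝ} (hy : y = Real.log (Real.log N)) (hy20 : 20 ≤ y) :
    ∃ J : ℕ, N ≤ 2^J ∧ Real.log J ≤ y + 2 := by
  obtain ⟨h1, h2, h3⟩ := N_facts hy hy20
  have hN0 : (0:ℝ) < N := by exact_mod_cast (by omega : 0 < N)
  have he := Real.add_one_le_exp y
  refine ⟨⌈2 * Real.exp y⌉₊, ?_, ?_⟩
  · have h4 : 2 * Real.exp y ≤ (⌈2 * Real.exp y⌉₊ : ℝ) := Nat.le_ceil _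
    set J := ⌈2 * Real.exp y⌉₊
    have h5 : Real.log N ≤ Real.log ((2:ℝ)^J) := by
      rw [h1, Real.log_pow]
      have := Real.log_two_gt_d9
      nlinarith
    have h6 := (Real.log_le_log_iff hN0 (by positivity)).1 h5
    exact_mod_cast h6
  · have h4 := (Nat.ceil_lt_add_one (by positivity : (0:ℝ) ≤ 2 * Real.exp y)).le
    set J := ⌈2 * Real.exp y⌉₊ with hJ
    have hJ0 : (0:ℝ) < J := by
      have : 2 * Real.exp y ≤ (J:ℝ) := Nat.le_ceil _
      linarith [Real.exp_pos y]
    rw [Real.log_le_iff_le_exp hJ0, Real.exp_add]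
    have : (3:ℝ) ≤ Real.exp 2 := by linarith [Real.add_one_le_exp (2:ℝ)]
    nlinarith

lemma sqrt_facts {N : ℕ} {y : ℝ} (hy : y = Real.log (Real.log N)) (hy20 : 20 ≤ y) :
    y - 2 ≤ Real.log (Real.log (Nat.sqrt N)) ∧ Real.exp (y / 4) ≤ √(Real.log (Nat.sqrt N)) ∧ 2 * y ≤ Nat.sqrt N := by
  obtain ⟨h1, h2, h3⟩ := N_facts hy hy20
  set z := Nat.sqrt N with hz
  have hz4 : 4 ≤ z := by rw [hz, Nat.le_sqrt]; omega
  have hlt : N < (z+1) * (z+1) := Nat.lt_succ_sqrt N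
  have hle : N ≤ z^4 := by
    have : z + 1 ≤ z * z := by nlinarith
    calc N ≤ (z+1)*(z+1) := hlt.le
      _ ≤ (z*z)*(z*z) := Nat.mul_le_mul this this
      _ = z^4 := by ring
  have hz0 : (0:ℝ) < z := by exact_mod_cast (by omega : 0 < z)
  have hN0 : (0:ℝ) < N := by exact_mod_cast (by omega : 0 < N)
  have h5 : Real.exp y / 4 ≤ Real.log z := by
    have : Real.log N ≤ Real.log ((z:ℝ)^4) := Real.log_le_log hN0 (by exact_mod_cast hle)
    rw [h1, Real.log_pow] at this
    push_cast at this; linarith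
  have e2 : (4:ℝ) ≤ Real.exp 2 := by
    have : Real.exp 2 = Real.exp 1 * Real.exp 1 := by rw [← Real.exp_add]; norm_num
    have h6 := Real.add_one_le_exp (1:ℝ)
    rw [this]; nlinarith
  have h6 : Real.exp (y - 2) ≤ Real.log z := by
    refine le_trans ?_ h5
    rw [Real.exp_sub]
    gcongr
  have hlz : 0 < Real.log z := (Real.exp_pos _).trans_le h6
  refine ⟨?_, ?_, ?_⟩
  · rwa [Real.le_log_iff_exp_le hlz]
  · apply Real.le_sqrt_of_sq_le
    rw [← Real.exp_nat_mul]
    refine le_trans ?_ h6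
    apply Real.exp_le_exp.2; push_cast; linarith
  · have h7 := Real.add_one_le_exp (y-2)
    have h8 : Real.exp (y-2) ≤ z := h6.trans ((Real.log_le_sub_one_of_pos hz0).trans (by linarith))
    have h9 : Real.exp (y-2) = Real.exp ((y-2)/2) * Real.exp ((y-2)/2) := by rw [← Real.exp_add]; ring_nf
    have h10 := Real.add_one_le_exp ((y-2)/2)
    nlinarith

lemma T_facts {N a v : ℕ} {y : ℝ} (hy : y = Real.log (Real.log N)) (hy20 : 20 ≤ y)
    (hav : a ≤ v) (hv : 1 ≤ v) (ha : 336 * (2:ℝ)^a * v ≤ y) :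
    ∀ p ∈ PP (2^a), Nat.sqrt N ≤ N / p ∧ y / 4 ≤ p * EE p (Nat.sqrt N) := by
  intro p hp
  have hpp := PP_prime hp
  have := Fact.mk hpp
  have hp2 : (2:ℝ) ≤ p := by exact_mod_cast hpp.two_le
  have hpa : (p:ℝ) ≤ 2^a := by exact_mod_cast PP_le hp
  obtain ⟨h1, h2, h3⟩ := sqrt_facts hy hy20
  have hv1 : (1:ℝ) ≤ v := by exact_mod_cast hv
  have hav' : (a:ℝ) ≤ v := by exact_mod_cast hav
  have h2a : (0:ℝ) < 2^a := by positivity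
  have hlogp : Real.log p ≤ v := by
    have : Real.log p ≤ Real.log ((2:ℝ)^a) := Real.log_le_log (by linarith) hpa
    rw [Real.log_pow] at this
    have h4 := Real.log_two_lt_d9
    have h5 : (a:ℝ) * Real.log 2 ≤ a * 1 := by gcongr; linarith
    linarith
  have hlp0 : 0 ≤ Real.log p := Real.log_nonneg (by linarith)
  have hplp : (p:ℝ) * Real.log p ≤ 2^a * v := mul_le_mul hpa hlogp hlp0 h2a.le
  have hpv : (p:ℝ) ≤ 2^a * v := by nlinarith
  constructor
  · rw [Nat.le_div_iff_mul_le hpp.pos]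
    have : p ≤ Nat.sqrt N := by
      have : (p:ℝ) ≤ Nat.sqrt N := by nlinarith
      exact_mod_cast this
    exact (Nat.mul_le_mul_left _ this).trans (Nat.sqrt_le N)
  · have h4 := EE_lower (p := p) (z := Nat.sqrt N) (by
      refine le_trans ?_ h2
      have : (p:ℝ)^(9*p) = Real.exp ((9*p:ℕ) * Real.log p) := by
        rw [Real.exp_nat_mul, Real.exp_log (by linarith)]
      rw [this]
      apply Real.exp_le_exp.2
      push_cast
      nlinarith)
    nlinarith

set_option maxHeartbeats 1000000 in
lemma main_core {N v s : ℕ} {y ε : ℝ} (hε : 0 < ε) (hε1 : ε ≤ 1) (hy : y = Real.log (Real.log N)) (hy20 : 20 ≤ y)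
    (hv1 : (2:ℝ)^v ≤ y) (hv2 : y < 2^(v+1)) (hs1 : 2^s ≤ v) (hs2 : v < 2^(s+1)) (hv1000 : 1000 ≤ v)
    (hB1 : 96 * (s:ℝ) ≤ ε / 8 * (v - 12 * s)) (hB2 : y^2 + 12 * y ≤ Real.exp y)
    (hB3 : 10^10 * Real.exp 9 ≤ ε * v^3) :
    ∃ G : ℝ, 0 < G ∧ ∀ X ≤ N, |(CC X : ℝ) - X * G| ≤ ε * N * G := by
  have hv0 : (1000:ℝ) ≤ v := by exact_mod_cast hv1000
  have hs0 : (0:ℝ) ≤ s := by positivity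
  have hsv : 24 * s ≤ v := by
    have : 24 * (s:ℝ) ≤ v := by nlinarith
    exact_mod_cast this
  set r := 12 * s with hr
  set a := v - r with ha
  set b := v + r with hb
  have har : a + r = v := by omega
  have haR : (a:ℝ) = v - 12 * s := by
    have : (a:ℝ) + r = v := by exact_mod_cast har
    have h2 : (r:ℝ) = 12 * s := by rw [hr]; push_cast; ring
    linarith
  have hbR : (b:ℝ) = v + 12 * s := by rw [hb, hr]; push_cast; ring
  have hab : a ≤ b := by omega
  have ha1 : 1 ≤ a := by omega
  have ha0 : (1:ℝ) ≤ a := by exact_mod_cast ha1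
  have hb2v : b ≤ 2 * v := by omega
  have hb2v' : (b:ℝ) ≤ 2 * v := by exact_mod_cast hb2v
  -- powers
  have hr12 : (v:ℝ)^12 ≤ 4096 * 2^r := by
    have h1 : (v:ℝ) ≤ 2^(s+1) := by exact_mod_cast hs2.le
    calc (v:ℝ)^12 ≤ (2^(s+1))^12 := by gcongr
      _ = 4096 * 2^r := by rw [hr, ← pow_mul, show (s+1)*12 = 12 + 12*s by ring, pow_add]; norm_num
  have h2r : (0:ℝ) < 2^r := by positivity
  have hv12 : (0:ℝ) < (v:ℝ)^12 := by positivity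
  have hinv : 1 / (2:ℝ)^r ≤ 4096 / (v:ℝ)^12 := by
    rw [div_le_div_iff₀ h2r hv12]; linarith
  have hpa : (2:ℝ)^a = 2^v * (1 / 2^r) := by
    rw [mul_one_div, eq_div_iff h2r.ne', ← pow_add, har]
  have h2v : (0:ℝ) < 2^v := by positivity
  have hN := (N_facts hy hy20).2.1
  have hN0 : (0:ℝ) < N := by rw [hN]; exact Real.exp_pos _
  obtain ⟨J, hJ1, hJ2⟩ := exists_J hy hy20
  -- T
  have hT := T_facts (a := a) (v := v) hy hy20 (by omega) (by omega) (by
    have h1 : (2:ℝ)^a ≤ 2^v * (4096 / (v:ℝ)^12) := by rw [hpa]; gcongr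
    have h2 : 336 * (2^v * (4096 / (v:ℝ)^12)) * v ≤ 2^v * 1 := by
      have : 336 * (2^v * (4096 / (v:ℝ)^12)) * v = 2^v * (336 * 4096 / (v:ℝ)^11) := by
        field_simp
      rw [this]
      gcongr
      rw [div_le_one (by positivity)]
      calc (336 * 4096 : ℝ) ≤ 1000^11 := by norm_num
        _ ≤ _ := by gcongr
    calc 336 * (2:ℝ)^a * v ≤ 336 * (2^v * (4096 / (v:ℝ)^12)) * v := by gcongr
      _ ≤ _ := h2
      _ ≤ y := by linarith)
  -- errors
  have hv11 : (0:ℝ) < (v:ℝ)^11 := by positivity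
  have he1 : (2:ℝ)^(2^b) ≤ N / (v:ℝ)^12 := by
    have h1 : ((2^b : ℕ):ℝ) ≤ y^2 := by
      push_cast
      calc (2:ℝ)^b ≤ 2^(2*v) := pow_le_pow_right₀ (by norm_num) hb2v
        _ = (2^v)^2 := by rw [mul_comm, pow_mul]
        _ ≤ y^2 := by gcongr
    have h2 : (v:ℝ) ≤ y := by
      have : (v:ℝ) < 2^v := by exact_mod_cast Nat.lt_two_pow_self
      linarith
    have h3 : (v:ℝ)^12 ≤ Real.exp (12 * y) := by
      have : (v:ℝ) ≤ Real.exp y := by linarith [Real.add_one_le_exp y]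
      calc (v:ℝ)^12 ≤ (Real.exp y)^12 := by gcongr
        _ = _ := by rw [← Real.exp_nat_mul]; norm_num
    have h4 : (2:ℝ)^(2^b) ≤ Real.exp (y^2) := by
      have : (2:ℝ) ≤ Real.exp 1 := by linarith [Real.add_one_le_exp (1:ℝ)]
      calc (2:ℝ)^(2^b) ≤ (Real.exp 1)^(2^b) := by gcongr
        _ = Real.exp ((2^b : ℕ):ℝ) := by rw [← Real.exp_nat_mul, mul_one]
        _ ≤ _ := Real.exp_le_exp.2 h1
    rw [le_div_iff₀ hv12]
    calc _ ≤ Real.exp (y^2) * Real.exp (12 * y) := by gcongr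
      _ = Real.exp (y^2 + 12 * y) := by rw [Real.exp_add]
      _ ≤ _ := by rw [hN]; exact Real.exp_le_exp.2 hB2
  have he1' : (2:ℝ)^(2^b) ≤ N * (1 / (v:ℝ)^11) := by
    refine he1.trans ?_
    rw [div_eq_mul_one_div]
    gcongr
    · linarith
    · norm_num
  have he2 : (2:ℝ)^a * (3 * N / (y/4)) ≤ N * (49152 / (v:ℝ)^11) := by
    calc (2:ℝ)^a * (3 * N / (y/4)) ≤ 2^a * (3 * N / (2^v/4)) := by gcongr
      _ = N * (12 * (1 / 2^r)) := by rw [hpa]; field_simp; norm_num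
      _ ≤ N * (12 * (4096 / (v:ℝ)^12)) := by gcongr
      _ = N * (49152 / (v:ℝ)^12) := by ring
      _ ≤ _ := by
        gcongr
        · linarith
        · norm_num
  have he3 : N * (1 + 9 * (1 + Real.log J)) * ((Real.log (2^b) + 2) / 2^b) ≤ N * (901120 / (v:ℝ)^11) := by
    have h1 : (1 + 9 * (1 + Real.log J)) ≤ 55 * 2^v := by
      have : y < 2 * 2^v := by rw [pow_succ] at hv2; linarith
      have h3 : (1:ℝ) ≤ 2^v := one_le_pow₀ (by norm_num)
      linarith
    have h2 : Real.log ((2:ℝ)^b) + 2 ≤ 4 * v := by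
      rw [Real.log_pow]
      have h4 := Real.log_two_lt_d9
      have h5 : (b:ℝ) * Real.log 2 ≤ b * 1 := by gcongr; linarith
      linarith
    have h3 : (2:ℝ)^b = 2^v * 2^r := by rw [hb, pow_add]
    have hl : 0 ≤ Real.log ((2:ℝ)^b) := Real.log_nonneg (one_le_pow₀ (by norm_num))
    calc (N:ℝ) * (1 + 9 * (1 + Real.log J)) * ((Real.log (2^b) + 2) / 2^b) ≤ (N:ℝ) * (55 * 2^v) * (4 * v / 2^b) := by gcongr
      _ = (N:ℝ) * (220 * v * (1 / 2^r)) := by rw [h3]; field_simp; norm_num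
      _ ≤ (N:ℝ) * (220 * v * (4096 / (v:ℝ)^12)) := by gcongr
      _ = _ := by field_simp; norm_num
  set G := GG (2^b) with hG
  have hG0 : 0 < G := GG_pos _
  have hGl : 10^6 / (v:ℝ)^11 ≤ ε / 4 * G := by
    have h1 := GG_lower b (by omega)
    have h2 : Real.exp (-9) / (256 * (v:ℝ)^8) ≤ G := by
      refine le_trans ?_ h1
      apply div_le_div_of_nonneg_left (Real.exp_pos _).le (by have : (0:ℝ) < b := by linarith
                                                              positivity)
      calc (b:ℝ)^8 ≤ (2 * v)^8 := by gcongr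
        _ = _ := by ring
    refine le_trans ?_ (mul_le_mul_of_nonneg_left h2 (by linarith))
    rw [Real.exp_neg]
    have : ε / 4 * ((Real.exp 9)⁻¹ / (256 * (v:ℝ)^8)) = (ε * v^3) / (1024 * Real.exp 9 * v^11) := by
      field_simp; norm_num
    rw [this, div_le_div_iff₀ hv11 (by positivity)]
    have h5 : 10^10 * Real.exp 9 * (v:ℝ)^11 ≤ ε * v^3 * v^11 := by gcongr
    have h6 : 0 < Real.exp 9 * (v:ℝ)^11 := by positivity
    have h7 : 10^6 * (1024 * Real.exp 9 * (v:ℝ)^11) ≤ 10^10 * Real.exp 9 * (v:ℝ)^11 := by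
      rw [mul_assoc 1024, mul_assoc (10^10), ← mul_assoc]
      exact mul_le_mul_of_nonneg_right (by norm_num) h6.le
    exact h7.trans h5
  have hNG : N * (10^6 / (v:ℝ)^11) ≤ ε / 4 * N * G := by
    calc (N:ℝ)*(10^6/(v:ℝ)^11) ≤ N*(ε/4*G) := mul_le_mul_of_nonneg_left hGl hN0.le
      _ = _ := by ring
  refine ⟨G, hG0, fun X hX => ?_⟩
  have hX' : (X:ℝ) ≤ N := by exact_mod_cast hX
  have hl := core_lower hX hJ1 (b := b) (by omega)
  have hu := core_upper (a := a) (T := y/4) (by linarith) hX hT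
  have h2a : (2:ℝ)^(2^a) ≤ 2^(2^b) := pow_le_pow_right₀ (by norm_num) (Nat.pow_le_pow_right (by norm_num) hab)
  have hcmp := GG_compare a b ha1 hab
  set H := GG (2^a) with hH
  have hH0 : 0 < H := GG_pos _
  have hη : 4 * ((b:ℝ) - a) / a ≤ ε / 8 := by
    rw [div_le_iff₀ (by linarith), haR, hbR]; linarith
  have hHG : H ≤ G * (1 + ε / 4) := by
    have h1 : H * (1 - ε / 8) ≤ G := le_trans (mul_le_mul_of_nonneg_left (by linarith) hH0.le) hcmp
    have h2 : 1 ≤ (1 - ε/8) * (1 + ε/4) := by nlinarith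
    calc H ≤ H * ((1 - ε/8) * (1 + ε/4)) := le_mul_of_one_le_right hH0.le h2
      _ = H * (1 - ε/8) * (1 + ε/4) := by ring
      _ ≤ _ := by gcongr
  have hXH : X * H ≤ X * G + ε / 4 * N * G := by
    calc X * H ≤ X * (G * (1 + ε/4)) := by gcongr
      _ = X * G + ε / 4 * X * G := by ring
      _ ≤ _ := by gcongr
  have hsum : N * (1 / (v:ℝ)^11) + N * (49152 / (v:ℝ)^11) + N * (901120 / (v:ℝ)^11) ≤ N * (10^6 / (v:ℝ)^11) := by
    have : N * (10^6 / (v:ℝ)^11) - (N * (1 / (v:ℝ)^11) + N * (49152 / (v:ℝ)^11) + N * (901120 / (v:ℝ)^11)) = N * (49727 / (v:ℝ)^11) := by ring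
    have h2 : 0 ≤ N * (49727 / (v:ℝ)^11) := by positivity
    linarith
  have hp1 : 0 ≤ N * (1 / (v:ℝ)^11) := by positivity
  have hp2 : 0 ≤ N * (49152 / (v:ℝ)^11) := by positivity
  have hp3 : 0 ≤ N * (901120 / (v:ℝ)^11) := by positivity
  have hp4 : 0 ≤ ε * N * G := by positivity
  rw [abs_le]
  constructor <;> linarith


lemma tendsto_log2 : Tendsto (Nat.log 2) atTop atTop := by
  refine tendsto_atTop.2 fun b => ?_
  filter_upwards [eventually_ge_atTop (2^b)] with n hn
  exact Nat.le_log_of_pow_le (by norm_num) hn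

lemma main_asymp1 {ε : ℝ} (hε : 0 < ε) (hε1 : ε ≤ 1) :
    ∀ᶠ N : ℕ in atTop, ∃ G : ℝ, 0 < G ∧ ∀ X ≤ N, |(CC X : ℝ) - X * G| ≤ ε * N * G := by
  have hy : Tendsto (fun N : ℕ => Real.log (Real.log N)) atTop atTop :=
    Real.tendsto_log_atTop.comp (Real.tendsto_log_atTop.comp tendsto_natCast_atTop_atTop)
  have hv : Tendsto (fun N : ℕ => Nat.log 2 ⌊Real.log (Real.log N)⌋₊) atTop atTop :=
    tendsto_log2.comp (tendsto_nat_floor_atTop.comp hy)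
  have hs : ∀ᶠ s : ℕ in atTop, 784 * (s:ℝ) ≤ ε * 2^s := by
    have h := (tendsto_pow_const_div_const_pow_of_one_lt 1 (r := 2) (by norm_num)).eventually
      (ge_mem_nhds (show (0:ℝ) < ε / 784 by positivity))
    filter_upwards [h] with s hs
    rw [pow_one, div_le_iff₀ (by positivity)] at hs
    linarith
  have hvs := tendsto_log2.eventually hs
  have h3 : ∀ᶠ v : ℕ in atTop, 10^10 * Real.exp 9 ≤ ε * (v:ℝ)^3 := by
    have h4 : Tendsto (fun v : ℕ => ε * (v:ℝ)^3) atTop atTop :=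
      Tendsto.const_mul_atTop hε ((tendsto_pow_atTop (by norm_num)).comp tendsto_natCast_atTop_atTop)
    exact h4.eventually_ge_atTop _
  filter_upwards [hy.eventually_ge_atTop 20, hv.eventually (hvs.and (h3.and (eventually_ge_atTop 1000)))]
    with N hN20 hN
  obtain ⟨hA, hB3, hv1000⟩ := hN
  set y := Real.log (Real.log N) with hyd
  set v := Nat.log 2 ⌊y⌋₊ with hvd
  have hfl : ⌊y⌋₊ ≠ 0 := by
    have : 1 ≤ ⌊y⌋₊ := Nat.le_floor (by push_cast; linarith)
    omega
  have hv1 : (2:ℝ)^v ≤ y := by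
    have h1 := Nat.pow_log_le_self 2 hfl
    have h2 : ((2^v : ℕ):ℝ) ≤ (⌊y⌋₊:ℝ) := by exact_mod_cast h1
    have h4 := Nat.floor_le (show 0 ≤ y by linarith)
    push_cast at h2
    linarith
  have hv2 : y < 2^(v+1) := by
    have h1 := Nat.lt_pow_succ_log_self (b := 2) (by norm_num) ⌊y⌋₊
    have h2 := (Nat.floor_lt (show 0 ≤ y by linarith)).1 h1
    push_cast at h2
    exact h2
  have hs1 := Nat.pow_log_le_self 2 (x := v) (by omega)
  have hs2 := Nat.lt_pow_succ_log_self (b := 2) (by norm_num) v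
  refine main_core hε hε1 hyd hN20 hv1 hv2 hs1 hs2 hv1000 ?_ ?_ hB3
  · have h1 : ((2:ℝ))^(Nat.log 2 v) ≤ v := by exact_mod_cast hs1
    have h2 := mul_le_mul_of_nonneg_left h1 hε.le
    have h4 : ε * (Nat.log 2 v : ℝ) ≤ 1 * (Nat.log 2 v : ℝ) := by gcongr
    have h5 : (0:ℝ) ≤ (Nat.log 2 v : ℝ) := by positivity
    linarith
  · have h1 := Real.pow_div_factorial_le_exp y (by linarith) 3
    have h2 : (Nat.factorial 3 : ℝ) = 6 := by norm_num [Nat.factorial]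
    rw [h2] at h1
    refine le_trans ?_ h1
    rw [le_div_iff₀ (by norm_num)]
    have h5 : 0 ≤ y * ((y - 20) * (y + 14)) := by
      apply mul_nonneg (by linarith); apply mul_nonneg <;> linarith
    nlinarith

lemma main_asymp {ε : ℝ} (hε : 0 < ε) :
    ∀ᶠ N : ℕ in atTop, ∃ G : ℝ, 0 < G ∧ ∀ X ≤ N, |(CC X : ℝ) - X * G| ≤ ε * N * G := by
  filter_upwards [main_asymp1 (ε := min ε 1) (by positivity) (min_le_right _ _)] with N hN
  obtain ⟨G, hG, h⟩ := hN
  refine ⟨G, hG, fun X hX => (h X hX).trans ?_⟩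
  gcongr
  exact min_le_left _ _

lemma cyclic_infinite : (Set.ofPred IsCyclicNum).Infinite := by
  refine Nat.infinite_setOfPred_prime.mono fun p hp => ?_
  have hp : p.Prime := hp
  refine ⟨hp.pos, ?_⟩
  rw [Nat.totient_prime hp]
  have h := hp.two_le
  have := Nat.coprime_self_add_right.1 (show Nat.Coprime (p-1) ((p-1)+1) by simp)
  have h2 : Nat.Coprime (p-1) ((p-1)+1) := by simp
  rw [Nat.sub_add_cancel (by omega)] at h2
  exact h2.symm

lemma CC_cyclicNum {n : ℕ} (hn : 1 ≤ n) : CC (cyclicNum n) = n := by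
  have h := Nat.count_nth_succ_of_infinite cyclic_infinite (n-1)
  rw [Nat.count_eq_card_filter_range, Nat.sub_add_cancel hn] at h
  conv_rhs => rw [← h]
  unfold CC cyclicNum
  congr 1
  ext x
  simp only [Finset.mem_filter, Finset.mem_Ioc, Finset.mem_range]
  constructor
  · rintro ⟨h1, h2⟩; exact ⟨by omega, h2⟩
  · rintro ⟨h1, h2⟩; exact ⟨⟨h2.1, by omega⟩, h2⟩

lemma cyclicNum_pos (n : ℕ) : 0 < cyclicNum n :=
  (Nat.nth_mem_of_infinite cyclic_infinite (n-1)).1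

lemma cyclicNum_mono {i n : ℕ} (h : i ≤ n) : cyclicNum i ≤ cyclicNum n :=
  (Nat.nth_strictMono cyclic_infinite).monotone (by omega)

lemma cyclicNum_tendsto : Tendsto cyclicNum atTop atTop :=
  (Nat.nth_strictMono cyclic_infinite).tendsto_atTop.comp (tendsto_sub_atTop_nat 1)

lemma pow_step (k : ℕ) {x : ℝ} (hx : 0 ≤ x) :
    x^(k+1) + (k+1) * x^k ≤ (x+1)^(k+1) ∧ (x+1)^(k+1) ≤ x^(k+1) + (k+1) * (x+1)^k := by
  induction k with
  | zero => norm_num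
  | succ k ih =>
    obtain ⟨h1, h2⟩ := ih
    have h3 : x^(k+1) ≤ (x+1)^(k+1) := by gcongr; linarith
    have h4 := mul_le_mul_of_nonneg_left h1 hx
    have h5 := mul_le_mul_of_nonneg_left h2 hx
    have h6 : 0 ≤ (x+1)^k := by positivity
    have h7 : 0 ≤ ((k:ℝ)+1) * (x+1)^k := by positivity
    push_cast
    constructor
    · have e1 : (x+1)^(k+1+1) = x * (x+1)^(k+1) + (x+1)^(k+1) := by ring
      have e2 : x * (x^(k+1) + (k+1) * x^k) + x^(k+1) = x^(k+1+1) + (k+1+1) * x^(k+1) := by ring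
      linarith
    · have e1 : (x+1)^(k+1+1) = x * (x+1)^(k+1) + (x+1)^(k+1) := by ring
      have e2 : x^(k+1+1) + (k+1+1) * (x+1)^(k+1) = x * (x^(k+1) + (k+1) * (x+1)^k) + (x+1)^(k+1) + (k+1)*(x+1)^k := by ring
      linarith

lemma sum_pow_bounds (k n : ℕ) :
    (n:ℝ)^(k+1) ≤ (k+1) * ∑ i ∈ Finset.Icc 1 n, (i:ℝ)^k ∧
    (k+1) * ∑ i ∈ Finset.Icc 1 n, (i:ℝ)^k ≤ (n:ℝ)^(k+1) + (k+1) * (n:ℝ)^k := by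
  induction n with
  | zero => simp; positivity
  | succ n ih =>
    rw [Finset.sum_Icc_succ_top (by omega)]
    obtain ⟨h1, h2⟩ := pow_step k (x := (n:ℝ)) (by positivity)
    obtain ⟨h3, h4⟩ := ih
    push_cast
    constructor <;> linarith

lemma final_bound {k n : ℕ} {ε G : ℝ} (hn : 1 ≤ n) (hε : 0 < ε) (hG : 0 < G)
    (h : ∀ X ≤ cyclicNum n, |(CC X : ℝ) - X * G| ≤ ε * cyclicNum n * G) :
    |∑ j ∈ Finset.Icc 1 n, ((cyclicNum j : ℝ)) ^ k - (n : ℝ) * (cyclicNum n : ℝ) ^ k / (k + 1)| ≤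
      (cyclicNum n : ℝ)^k * (2 * k * ε * n + 1) := by
  have hN : (0:ℝ) < cyclicNum n := by exact_mod_cast cyclicNum_pos n
  set N : ℝ := (cyclicNum n : ℝ) with hNd
  have hn0 : (0:ℝ) < n := by exact_mod_cast hn
  have hNG : 0 < N * G := by positivity
  have hnn : |(n:ℝ) - N * G| ≤ ε * N * G := by
    have := h _ le_rfl
    rwa [CC_cyclicNum hn] at this
  have hterm : ∀ i ∈ Finset.Icc 1 n, |((cyclicNum i : ℝ)/N)^k - ((i:ℝ)/n)^k| ≤ 2 * k * ε := by
    intro i hi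
    rw [Finset.mem_Icc] at hi
    have hi' := h _ (cyclicNum_mono hi.2)
    rw [CC_cyclicNum hi.1] at hi'
    have hin : (i:ℝ)/n ≤ 1 := by
      rw [div_le_one hn0]; exact_mod_cast hi.2
    have hcn : (cyclicNum i : ℝ)/N ≤ 1 := by
      rw [div_le_one hN, hNd]; exact_mod_cast cyclicNum_mono hi.2
    have hin0 : 0 ≤ (i:ℝ)/n := by positivity
    have hcn0 : 0 ≤ (cyclicNum i : ℝ)/N := by positivity
    have hd : |(cyclicNum i : ℝ)/N - (i:ℝ)/n| ≤ 2 * ε := by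
      have e : (cyclicNum i : ℝ)/N - (i:ℝ)/n
          = -(((i:ℝ) - cyclicNum i * G) / (N*G)) + (i:ℝ)/n * (((n:ℝ) - N*G)/(N*G)) := by
        field_simp; ring
      have h1 : |((i:ℝ) - cyclicNum i * G) / (N*G)| ≤ ε := by
        rw [abs_div, abs_of_pos hNG, div_le_iff₀ hNG]; linarith
      have h2 : |((n:ℝ) - N*G)/(N*G)| ≤ ε := by
        rw [abs_div, abs_of_pos hNG, div_le_iff₀ hNG]; linarith
      rw [e]
      refine (abs_add_le _ _).trans ?_
      rw [abs_neg, abs_mul, abs_of_nonneg hin0]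
      have h3 : (i:ℝ)/n * |((n:ℝ) - N*G)/(N*G)| ≤ 1 * ε := by gcongr
      linarith
    refine (abs_pow_sub_pow_le _ _ k).trans ?_
    have h4 : max |(cyclicNum i : ℝ)/N| |(i:ℝ)/n| ^ (k-1) ≤ 1 := by
      apply pow_le_one₀ (by positivity)
      rw [abs_of_nonneg hin0, abs_of_nonneg hcn0]
      exact max_le hcn hin
    calc _ ≤ 2 * ε * k * 1 := by gcongr
      _ = _ := by ring
  have hsum : |∑ i ∈ Finset.Icc 1 n, ((cyclicNum i : ℝ)/N)^k - ∑ i ∈ Finset.Icc 1 n, ((i:ℝ)/n)^k| ≤ n * (2 * k * ε) := by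
    rw [← Finset.sum_sub_distrib]
    refine (Finset.abs_sum_le_sum_abs _ _).trans ((Finset.sum_le_sum hterm).trans ?_)
    simp
  have hT : |∑ i ∈ Finset.Icc 1 n, ((i:ℝ)/n)^k - n / (k+1)| ≤ 1 := by
    obtain ⟨h1, h2⟩ := sum_pow_bounds k n
    simp only [div_pow]
    rw [← Finset.sum_div]
    set T := ∑ i ∈ Finset.Icc 1 n, (i:ℝ)^k
    have hk1 : (0:ℝ) < k + 1 := by positivity
    have hnk : (0:ℝ) < (n:ℝ)^k := by positivity
    have e : T / (n:ℝ)^k - n/(k+1) = ((k+1) * T - (n:ℝ)^(k+1)) / ((k+1) * (n:ℝ)^k) := by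
      field_simp
      ring
    rw [e, abs_of_nonneg (div_nonneg (by linarith) (by positivity)), div_le_one (by positivity)]
    linarith
  have hS : ∑ j ∈ Finset.Icc 1 n, ((cyclicNum j : ℝ)) ^ k = N^k * ∑ i ∈ Finset.Icc 1 n, ((cyclicNum i : ℝ)/N)^k := by
    rw [Finset.mul_sum]
    refine Finset.sum_congr rfl fun i _ => ?_
    rw [div_pow, mul_div_cancel₀ _ (by positivity)]
  rw [hS, show (n:ℝ) * N^k / (k+1) = N^k * (n/(k+1)) by ring, ← mul_sub, abs_mul, abs_of_pos (by positivity)]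
  gcongr
  refine (abs_sub_le _ (∑ i ∈ Finset.Icc 1 n, ((i:ℝ)/n)^k) _).trans ?_
  linarith

theorem sum_pow_cyclicNum_isEquivalent (k : ℕ) (hk : 0 < k) :
    (fun n : ℕ => ∑ j ∈ Finset.Icc 1 n, ((cyclicNum j : ℝ)) ^ k) ~[atTop]
      (fun n : ℕ => (n : ℝ) * (cyclicNum n : ℝ) ^ k / (k + 1)) := by
  rw [IsEquivalent, isLittleO_iff]
  intro δ hδ
  have hk0 : (0:ℝ) < k := by exact_mod_cast hk
  have hε : 0 < δ / (4 * k * (k+1)) := by positivity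
  have hbig : Tendsto (fun n : ℕ => (n:ℝ) * (δ / (2 * (k+1)))) atTop atTop :=
    Tendsto.atTop_mul_const (by positivity) tendsto_natCast_atTop_atTop
  filter_upwards [cyclicNum_tendsto.eventually (main_asymp hε), eventually_ge_atTop 1,
    hbig.eventually_ge_atTop 1] with n hmain hn h1
  obtain ⟨G, hG, h⟩ := hmain
  have hb := final_bound (k := k) hn hε hG h
  simp only [Pi.sub_apply, Real.norm_eq_abs]
  refine hb.trans ?_
  rw [abs_of_nonneg (by positivity)]
  have e : δ * ((n:ℝ) * (cyclicNum n : ℝ)^k / (k+1)) = (cyclicNum n : ℝ)^k * (2 * k * (δ / (4 * k * (k+1))) * n + n * (δ / (2 * (k+1)))) := by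
    field_simp; ring
  rw [e]
  gcongr
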